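/- arXiv:math/0609752 — 3 statements merged into one kernel-verified Lean document; each statement's English description precedes it below -/
import Mathlib

section
/- Under hypotheses (a)–(d) together with ϰ₀ := sup_{x∈ℝ} ϰ̃(x) < ∞, there exists a constant c ≥ 1 such that for all x ∈ ℝ: c^{−1}/q₁(x) ≤ ∫_x^∞ exp(−∫_x^t q(ξ) dξ) dt ≤ c/q₁(x) (in particular the integral converges for every x). -/
/-!
Write `J x = ∫_x^∞ exp (-∫_x^t q) dt`. Condition (b) says that `1 / q₁` has derivative at most
`1 / s` in absolute value, and by (d) this is at most `ν / s x` on `Δ(x)`. Fix a constant `A`.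
As `s → ∞`, for `|x|` large the window `[x, x + A / q₁ x]` lies inside `Δ(x)` and `q₁` stays
comparable with `q₁ x` on it (`abs_one_div_sub_one_div_le`). Writing `q₂ = q₁ · (q₂ / q₁)` and
integrating by parts against `G t = ∫_x^t q₂ / q₁`, for which `|q₁ G| ≤ K` by the bound on `ϰ`,
gives `|∫_x^t q₂| ≤ 2K` on the window (`abs_integral_le_of_parts`). Both facts are collected in
`local_control`.

The lower bound follows: for `|x|` large the integral of `q` over `[x, x + 1 / q₁ x]` is at most
`3/2 + 2K`, and for `x` in a compact interval its integral over `[x, x + 1]` is bounded.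

For the upper bound, take `A = 4K + 4`: over one step from `x` to `y = x + A / q₁ x` the exponential
drops to at most `1/3`, while the integrand is at most `1` because `q ≥ 0`. Hence
`J x ≤ A / q₁ x + J y / 3`, and as `q₁ x ≤ (4/3) q₁ y`, the function `f = q₁ J` satisfies
`f x ≤ A + f y / 2`. With the integrals truncated at `N`, `f` is bounded on compact intervals, and
the recursion turns this into a bound independent of `N` (`exists_truncated_bound`). This is done
first on `[R, N]`, where the constant is `2A`; it bounds `f` on `[-R, R]` by compactness, and then
the recursion is run again on `[x, R]`, where for points left of `-R` condition (c) keeps the step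
from crossing `0`.
-/

open MeasureTheory Filter Topology
open scoped ENNReal

theorem MeasureTheory.LocallyIntegrable.intervalIntegrable_real {f : ℝ → ℝ}
    (hf : LocallyIntegrable f volume) {a b : ℝ} : IntervalIntegrable f volume a b :=
  (hf.integrableOn_isCompact isCompact_uIcc).intervalIntegrable

/-! ### Local behaviour of `q₁` and of the integrals of `q₂` -/

/-- A nonlinear Gronwall inequality: if `f u ≤ f x + L ∫_x^u f²` then `1 / f` decreases between `x`
and `t` by at most `L (t - x)`. It is obtained by comparing `f` with the right-hand side `w`, which
satisfies `w' = L f² ≤ L w²`. -/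
theorem inv_sub_le_inv_of_le_integral_sq {f : ℝ → ℝ} (hf : Continuous f) (hpos : ∀ u, 0 < f u)
    {x t L : ℝ} (hL : 0 ≤ L) (hxt : x ≤ t)
    (h : ∀ u ∈ Set.Icc x t, f u ≤ f x + L * ∫ v in x..u, f v ^ 2) :
    1 / f x - L * (t - x) ≤ 1 / f t := by
  set w : ℝ → ℝ := fun u => f x + L * ∫ v in x..u, f v ^ 2 with hw
  have hwd : ∀ u, HasDerivAt w (L * f u ^ 2) u := fun u =>
    (((hf.pow 2).integral_hasStrictDerivAt x u).hasDerivAt.const_mul L).const_add (f x)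
  have hwpos : ∀ u ∈ Set.Icc x t, 0 < w u := fun u hu => (hpos u).trans_le (h u hu)
  have hgd : ∀ u ∈ Set.Icc x t,
      HasDerivAt (fun u => (w u)⁻¹ + L * u) (-(L * f u ^ 2) / w u ^ 2 + L * 1) u := fun u hu =>
    ((hwd u).fun_inv (hwpos u hu).ne').add ((hasDerivAt_id u).const_mul L)
  have hmono : MonotoneOn (fun u => (w u)⁻¹ + L * u) (Set.Icc x t) := by
    refine monotoneOn_of_deriv_nonneg (convex_Icc x t)
      (fun u hu => (hgd u hu).continuousAt.continuousWithinAt)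
      (fun u hu => (hgd u (interior_subset hu)).differentiableAt.differentiableWithinAt) ?_
    intro u hu
    have hu := interior_subset hu
    rw [(hgd u hu).deriv]
    have h1 : f u ^ 2 / w u ^ 2 ≤ 1 := by
      rw [div_le_one (pow_pos (hwpos u hu) 2)]
      exact pow_le_pow_left₀ (hpos u).le (h u hu) 2
    have h2 : -(L * f u ^ 2) / w u ^ 2 + L * 1 = L * (1 - f u ^ 2 / w u ^ 2) := by ring
    rw [h2]
    exact mul_nonneg hL (by linarith)
  have h1 := hmono (Set.left_mem_Icc.2 hxt) (Set.right_mem_Icc.2 hxt) hxt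
  have hwx : w x = f x := by simp [hw]
  have h2 : (w t)⁻¹ ≤ (f t)⁻¹ :=
    inv_anti₀ (hpos t) (h t (Set.right_mem_Icc.2 hxt))
  simp only [hwx] at h1
  simp only [one_div]
  linarith

/-- If `f` is locally absolutely continuous and `|f'| / f² ≤ L` a.e., then `1 / f` is `L`-Lipschitz.
The two signs come from `inv_sub_le_inv_of_le_integral_sq` applied to `f` and to its reflection. -/
theorem abs_one_div_sub_one_div_le {f f' : ℝ → ℝ} (hpos : ∀ u, 0 < f u) (hcont : Continuous f)
    (hAC : ∀ a b : ℝ, f b - f a = ∫ v in a..b, f' v)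
    {x t L : ℝ} (hL : 0 ≤ L) (hxt : x ≤ t)
    (hb : ∀ᵐ u : ℝ, u ∈ Set.Icc x t → |f' u| / f u ^ 2 ≤ L) :
    |1 / f t - 1 / f x| ≤ L * (t - x) := by
  have key : ∀ a b, x ≤ a → a ≤ b → b ≤ t → |f b - f a| ≤ L * ∫ v in a..b, f v ^ 2 := by
    intro a b hxa hab hbt
    rw [hAC a b, ← intervalIntegral.integral_const_mul, ← Real.norm_eq_abs]
    refine intervalIntegral.norm_integral_le_of_norm_le hab ?_
      ((continuous_const.mul (hcont.pow 2)).intervalIntegrable a b)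
    filter_upwards [hb] with u hu hmem
    have := hu ⟨hxa.trans hmem.1.le, hmem.2.trans hbt⟩
    rwa [div_le_iff₀ (pow_pos (hpos u) 2)] at this
  have h1 := inv_sub_le_inv_of_le_integral_sq hcont hpos hL hxt (fun u hu => by
    have := (abs_le.1 (key x u le_rfl hu.1 hu.2)).2
    linarith)
  have h2 := inv_sub_le_inv_of_le_integral_sq (f := fun u => f (-u)) (hcont.comp continuous_neg)
    (fun u => hpos _) hL (neg_le_neg hxt) (fun u hu => by
      have := (abs_le.1 (key (-u) t (by linarith [hu.2]) (by linarith [hu.1]) le_rfl)).1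
      rw [intervalIntegral.integral_comp_neg (fun v => f v ^ 2)]
      simp only [neg_neg]
      linarith)
  simp only [neg_neg] at h2
  rw [abs_le]
  constructor <;> linarith

/-- Integration by parts bounds `∫ r` by `|p G| + ∫ |p' G|` with `G u = ∫_x^u r / p`; the second term
is at most `L Q K (t - x) ≤ K` because `|p' G| ≤ L p · |p G|`. -/
theorem abs_integral_le_of_parts {p p' r : ℝ → ℝ} (hpos : ∀ u, 0 < p u) (hcont : Continuous p)
    (hp' : LocallyIntegrable p' volume)
    (hAC : ∀ a b : ℝ, p b - p a = ∫ v in a..b, p' v)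
    (hr : LocallyIntegrable r volume)
    {x t L Q K : ℝ} (hL : 0 ≤ L) (hK : 0 ≤ K) (hxt : x ≤ t)
    (hb : ∀ᵐ u : ℝ, u ∈ Set.Icc x t → |p' u| / p u ^ 2 ≤ L)
    (hQ : ∀ u ∈ Set.Icc x t, p u ≤ Q)
    (hG : ∀ u ∈ Set.Icc x t, |p u * ∫ v in x..u, r v / p v| ≤ K)
    (hLQ : L * Q * (t - x) ≤ 1) :
    |∫ v in x..t, r v| ≤ 2 * K := by
  have hrp : IntervalIntegrable (fun v => r v / p v) volume x t := by
    simp only [div_eq_mul_inv]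
    exact (hr.intervalIntegrable_real).mul_continuousOn
      (hcont.inv₀ fun u => (hpos u).ne').continuousOn
  have hp'i : IntervalIntegrable p' volume x t := hp'.intervalIntegrable_real
  set G : ℝ → ℝ := fun u => ∫ v in x..u, r v / p v with hGdef
  have hpeq : p = fun u => (∫ v in x..u, p' v) - (-(p x)) := by
    funext u
    rw [← hAC x u]; ring
  have hpac : AbsolutelyContinuousOnInterval p x t := by
    rw [hpeq]
    exact (hp'i.absolutelyContinuousOnInterval_intervalIntegral (by simp)).sub
      ((LipschitzWith.const (-(p x))).lipschitzOnWith.absolutelyContinuousOnInterval)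
  have hGac : AbsolutelyContinuousOnInterval G x t :=
    hrp.absolutelyContinuousOnInterval_intervalIntegral (by simp)
  have hpd : ∀ᵐ u : ℝ, HasDerivAt p (p' u) u := by
    filter_upwards [_root_.LocallyIntegrable.ae_hasDerivAt_integral hp'] with u hu
    rw [hpeq]
    exact (hu x).sub_const _
  have e1 : ∫ v in x..t, r v = ∫ v in x..t, p v * deriv G v := by
    refine intervalIntegral.integral_congr_ae ?_
    filter_upwards [hrp.ae_hasDerivAt_integral] with u hu hmem
    have : HasDerivAt G (r u / p u) u := hu (Set.uIoc_subset_uIcc hmem) x (by simp)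
    rw [this.deriv, mul_div_cancel₀ _ (hpos u).ne']
  have e2 : ‖∫ v in x..t, deriv p v * G v‖ ≤ (L * Q * K) * |t - x| := by
    refine intervalIntegral.norm_integral_le_of_norm_le_const_ae ?_
    filter_upwards [hpd, hb] with u hu hbu hmem
    rw [Set.uIoc_of_le hxt] at hmem
    have hm : u ∈ Set.Icc x t := ⟨hmem.1.le, hmem.2⟩
    have h1 := hbu hm
    rw [div_le_iff₀ (pow_pos (hpos u) 2)] at h1
    have h2 := hG u hm
    rw [abs_mul, abs_of_pos (hpos u)] at h2
    rw [hu.deriv, Real.norm_eq_abs, abs_mul]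
    calc |p' u| * |G u| ≤ (L * p u ^ 2) * |G u| := by gcongr
      _ = (L * p u) * (p u * |G u|) := by ring
      _ ≤ (L * Q) * K := by
        have := hQ u hm
        have := (hpos u).le
        have : 0 ≤ p u * |G u| := by positivity
        gcongr
        exact mul_nonneg hL (by linarith)
  have hGx : G x = 0 := by simp [hGdef]
  rw [e1, hpac.integral_mul_deriv_eq_deriv_mul hGac, hGx]
  rw [Real.norm_eq_abs, abs_of_nonneg (sub_nonneg.2 hxt)] at e2
  have e3 := hG t (Set.right_mem_Icc.2 hxt)
  have e4 : L * Q * K * (t - x) ≤ K := by nlinarith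
  have e5 := abs_sub (p t * G t) (∫ v in x..t, deriv p v * G v)
  rw [mul_zero, sub_zero]
  linarith

/-- On the window `[x, x + A / p x]`, if `L A ≤ 1/3`, the function `p` is comparable with `p x` and
the integral of the perturbation `r` is bounded by `2K`. -/
theorem local_control {p p' r : ℝ → ℝ} (hpos : ∀ u, 0 < p u) (hcont : Continuous p)
    (hp' : LocallyIntegrable p' volume)
    (hAC : ∀ a b : ℝ, p b - p a = ∫ v in a..b, p' v)
    (hr : LocallyIntegrable r volume)
    {x L A K : ℝ} (hL : 0 ≤ L) (hK : 0 ≤ K) (hLA : L * A ≤ 1 / 3)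
    (hb : ∀ᵐ u : ℝ, u ∈ Set.Icc x (x + A / p x) → |p' u| / p u ^ 2 ≤ L)
    (hG : ∀ u ∈ Set.Icc x (x + A / p x), |p u * ∫ v in x..u, r v / p v| ≤ K)
    {t : ℝ} (ht : t ∈ Set.Icc x (x + A / p x)) :
    3 / 4 * p x ≤ p t ∧ p t ≤ 3 / 2 * p x ∧ |∫ v in x..t, r v| ≤ 2 * K := by
  have hx := hpos x
  -- `|1 / p u - 1 / p x| ≤ L A / p x ≤ (1/3) / p x`, so `1 / p u` is within `[2/3, 4/3] / p x`.
  have hcomp : ∀ u ∈ Set.Icc x (x + A / p x), 3 / 4 * p x ≤ p u ∧ p u ≤ 3 / 2 * p x := by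
    intro u hu
    have h1 := abs_one_div_sub_one_div_le hpos hcont hAC hL hu.1
      (hb.mono fun v hv hm => hv ⟨hm.1, hm.2.trans hu.2⟩)
    have h2 : L * (u - x) ≤ 1 / 3 * (1 / p x) :=
      calc L * (u - x) ≤ L * (A / p x) := by gcongr; linarith [hu.2]
        _ = L * A * (1 / p x) := by ring
        _ ≤ _ := by gcongr
    have h3 := abs_le.1 (h1.trans h2)
    have hu0 := hpos u
    have e1 : 1 / p u ≤ 4 / (3 * p x) := by
      have : 4 / (3 * p x) = 4 / 3 * (1 / p x) := by ring
      linarith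
    have e2 : 2 / (3 * p x) ≤ 1 / p u := by
      have : 2 / (3 * p x) = 2 / 3 * (1 / p x) := by ring
      linarith
    rw [div_le_div_iff₀ hu0 (by positivity)] at e1
    rw [div_le_div_iff₀ (by positivity) hu0] at e2
    constructor <;> linarith
  refine ⟨(hcomp t ht).1, (hcomp t ht).2, ?_⟩
  refine abs_integral_le_of_parts hpos hcont hp' hAC hr hL hK ht.1
    (hb.mono fun v hv hm => hv ⟨hm.1, hm.2.trans ht.2⟩)
    (fun u hu => (hcomp u ⟨hu.1, hu.2.trans ht.2⟩).2)
    (fun u hu => hG u ⟨hu.1, hu.2.trans ht.2⟩) ?_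
  calc L * (3 / 2 * p x) * (t - x) ≤ L * (3 / 2 * p x) * (A / p x) := by
        gcongr; linarith [ht.2]
    _ = 3 / 2 * (L * A) := by field_simp
    _ ≤ 1 := by linarith

/-! ### Bounds for the truncated integrals -/

/-- If `f` is bounded above on `S` and at each `x ∈ S` either `f x ≤ D` or `f x ≤ D + f y / 2` for some
`y ∈ S`, then `f ≤ 2D` on `S`: compare both sides with the supremum. -/
theorem le_two_mul_of_half_recursion {S : Set ℝ} {f : ℝ → ℝ} {D : ℝ} (hD : 0 ≤ D)
    (hbd : BddAbove (f '' S))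
    (h : ∀ x ∈ S, f x ≤ D ∨ ∃ y ∈ S, f x ≤ D + 1 / 2 * f y) : ∀ x ∈ S, f x ≤ 2 * D := by
  intro x hx
  have hle : ∀ y ∈ S, f y ≤ sSup (f '' S) := fun y hy => le_csSup hbd ⟨y, hy, rfl⟩
  have h1 : sSup (f '' S) ≤ max D (D + 1 / 2 * sSup (f '' S)) := by
    refine csSup_le ⟨_, x, hx, rfl⟩ ?_
    rintro _ ⟨y, hy, rfl⟩
    rcases h y hy with h2 | ⟨z, hz, h2⟩
    · exact h2.trans (le_max_left _ _)
    · exact (h2.trans (by linarith [hle z hz])).trans (le_max_right _ _)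
  have h2 := hle x hx
  rcases le_max_iff.1 h1 with h3 | h3 <;> linarith

section
variable {q : ℝ → ℝ}

theorem continuous_exp_neg_integral (hqloc : LocallyIntegrable q volume) (x : ℝ) :
    Continuous fun t => Real.exp (-∫ ξ in x..t, q ξ) :=
  Real.continuous_exp.comp (intervalIntegral.continuous_primitive
    (fun _ _ => hqloc.intervalIntegrable_real) x).neg

theorem exp_neg_integral_le_one (hq : ∀ x, 0 ≤ q x) {x t : ℝ} (hxt : x ≤ t) :
    Real.exp (-∫ ξ in x..t, q ξ) ≤ 1 :=
  Real.exp_le_one_iff.2 (neg_nonpos.2 (intervalIntegral.integral_nonneg hxt fun u _ => hq u))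

theorem truncated_nonneg {x N : ℝ} (h : x ≤ N) :
    0 ≤ ∫ t in x..N, Real.exp (-∫ ξ in x..t, q ξ) :=
  intervalIntegral.integral_nonneg h fun _ _ => (Real.exp_pos _).le

theorem truncated_le (hq : ∀ x, 0 ≤ q x) (hqloc : LocallyIntegrable q volume)
    {x N : ℝ} (h : x ≤ N) :
    ∫ t in x..N, Real.exp (-∫ ξ in x..t, q ξ) ≤ N - x := by
  have := intervalIntegral.integral_mono_on (g := fun _ => (1 : ℝ)) (μ := volume) h
    ((continuous_exp_neg_integral hqloc x).intervalIntegrable x N)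
    intervalIntegrable_const
    (fun t ht => exp_neg_integral_le_one hq ht.1)
  simpa only [intervalIntegral.integral_const, smul_eq_mul, mul_one] using this

theorem truncated_step (hq : ∀ x, 0 ≤ q x) (hqloc : LocallyIntegrable q volume)
    {x y N : ℝ} (hxy : x ≤ y) :
    ∫ t in x..N, Real.exp (-∫ ξ in x..t, q ξ) ≤
      (y - x) + Real.exp (-∫ ξ in x..y, q ξ) * ∫ t in y..N, Real.exp (-∫ ξ in y..t, q ξ) := by
  have hc := continuous_exp_neg_integral hqloc x
  rw [← intervalIntegral.integral_add_adjacent_intervals (hc.intervalIntegrable x y)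
    (hc.intervalIntegrable y N), ← intervalIntegral.integral_const_mul]
  have : ∀ t, Real.exp (-∫ ξ in x..t, q ξ) =
      Real.exp (-∫ ξ in x..y, q ξ) * Real.exp (-∫ ξ in y..t, q ξ) := fun t => by
    rw [← Real.exp_add, ← intervalIntegral.integral_add_adjacent_intervals
      (hqloc.intervalIntegrable_real (a := x) (b := y))
      (hqloc.intervalIntegrable_real (a := y) (b := t))]
    ring_nf
  have h2 : ∫ t in y..N, Real.exp (-∫ ξ in x..t, q ξ) =
      ∫ t in y..N, Real.exp (-∫ ξ in x..y, q ξ) * Real.exp (-∫ ξ in y..t, q ξ) := by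
    simp_rw [← this]
  rw [h2]
  linarith [truncated_le hq hqloc hxy]

/-- If a step of length `A / p x` outside `[-R, R]` brings the exponential to at most `1/3`, leaves
at least `3/4` of the value of `p`, and does not cross `0` from the left, then the truncated
integrals are `O(1 / p x)`, uniformly in the truncation point `N` and in `x`. -/
theorem exists_truncated_bound (hq : ∀ x, 0 ≤ q x) (hqloc : LocallyIntegrable q volume)
    {p : ℝ → ℝ} (hpos : ∀ u, 0 < p u) (hcont : Continuous p) {R A : ℝ} (hR : 0 < R) (hA : 0 < A)
    (hstep : ∀ x, R ≤ |x| → p x ≤ 4 / 3 * p (x + A / p x) ∧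
      Real.exp (-∫ ξ in x..(x + A / p x), q ξ) ≤ 1 / 3 ∧ (x < 0 → x + A / p x ≤ 0)) :
    ∃ C : ℝ, ∀ x N, x ≤ N → p x * ∫ t in x..N, Real.exp (-∫ ξ in x..t, q ξ) ≤ C := by
  set J : ℝ → ℝ → ℝ := fun N x => ∫ t in x..N, Real.exp (-∫ ξ in x..t, q ξ) with hJ
  have hAp : ∀ x, 0 < A / p x := fun x => div_pos hA (hpos x)
  have hrec : ∀ x N, R ≤ |x| → x + A / p x ≤ N →
      p x * J N x ≤ A + 1 / 2 * (p (x + A / p x) * J N (x + A / p x)) := by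
    intro x N hx hN
    obtain ⟨h1, h2, -⟩ := hstep x hx
    set y := x + A / p x with hy
    have hJy : 0 ≤ J N y := truncated_nonneg hN
    have hxy : x ≤ y := by linarith [hAp x]
    have hpx := hpos x
    have hpy := hpos y
    calc p x * J N x ≤ p x * ((y - x) + Real.exp (-∫ ξ in x..y, q ξ) * J N y) := by
          gcongr; exact truncated_step hq hqloc hxy
      _ ≤ p x * ((y - x) + 1 / 3 * J N y) := by gcongr
      _ = A + p x * (1 / 3 * J N y) := by rw [hy]; field_simp; ring
      _ ≤ A + (4 / 3 * p y) * (1 / 3 * J N y) := by gcongr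
      _ ≤ A + 1 / 2 * (p y * J N y) := by nlinarith [mul_nonneg hpy.le hJy]
  have bdd : ∀ a b N, b ≤ N → BddAbove ((fun x => p x * J N x) '' Set.Icc a b) := by
    intro a b N hbN
    obtain ⟨M, hM⟩ := (isCompact_Icc (a := a) (b := b)).bddAbove_image
      (f := fun x => p x * (N - x)) (by fun_prop)
    refine ⟨M, ?_⟩
    rintro _ ⟨x, hx, rfl⟩
    refine le_trans ?_ (hM ⟨x, hx, rfl⟩)
    exact mul_le_mul_of_nonneg_left (truncated_le hq hqloc (hx.2.trans hbN)) (hpos x).le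
  have right : ∀ N x, x ∈ Set.Icc R N → p x * J N x ≤ 2 * A := by
    intro N
    refine le_two_mul_of_half_recursion hA.le (bdd R N N le_rfl) fun x hx => ?_
    have hRx : R ≤ |x| := hx.1.trans (le_abs_self x)
    rcases le_total (x + A / p x) N with h | h
    · exact Or.inr ⟨_, ⟨by linarith [hx.1, hAp x], h⟩, hrec x N hRx h⟩
    · left
      calc p x * J N x ≤ p x * (A / p x) := by
            gcongr
            · exact (hpos x).le
            · exact (truncated_le hq hqloc hx.2).trans (by linarith)
        _ = A := mul_div_cancel₀ _ (hpos x).ne'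
  obtain ⟨M, hM⟩ := (isCompact_Icc (a := -R) (b := R)).bddAbove_image (f := p) hcont.continuousOn
  have hM' : ∀ x ∈ Set.Icc (-R) R, p x ≤ M := fun x hx => hM ⟨x, hx, rfl⟩
  have hM0 : 0 < M := (hpos R).trans_le (hM' R ⟨by linarith, le_rfl⟩)
  set D : ℝ := max A (M * (2 * R + 2 * A / p R)) with hD
  have hAD : A ≤ D := le_max_left _ _
  have left : ∀ N, R ≤ N → ∀ x ≤ R, p x * J N x ≤ 2 * D := by
    intro N hN x hx
    refine le_two_mul_of_half_recursion (S := Set.Icc x R) (f := fun x => p x * J N x)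
      (hA.le.trans hAD) (bdd x R N hN) (fun z hz => ?_) x ⟨le_rfl, hx⟩
    rcases lt_or_ge z (-R) with h | h
    · have hz0 : z < 0 := by linarith
      have hRz : R ≤ |z| := by rw [abs_of_neg hz0]; linarith
      have h3 := (hstep z hRz).2.2 hz0
      refine Or.inr ⟨z + A / p z, ⟨by linarith [hz.1, hAp z], by linarith⟩,
        (hrec z N hRz (by linarith)).trans (by linarith)⟩
    · left
      refine le_trans ?_ (le_max_right _ _)
      have h4 : J N R ≤ 2 * A / p R := by
        rw [le_div_iff₀ (hpos R), mul_comm]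
        exact right N R ⟨le_rfl, hN⟩
      have h5 : J N z ≤ 2 * R + 2 * A / p R := by
        have h6 : J N z ≤ (R - z) + _ * J N R := truncated_step hq hqloc hz.2
        have h7 := mul_le_of_le_one_left (truncated_nonneg (q := q) hN)
          (exp_neg_integral_le_one hq hz.2)
        linarith
      have h8 : 0 ≤ J N z := truncated_nonneg (hz.2.trans hN)
      exact mul_le_mul (hM' z ⟨h, hz.2⟩) h5 h8 hM0.le
  refine ⟨2 * D, fun x N hxN => ?_⟩
  rcases le_total R x with h | h
  · exact (right N x ⟨h, hxN⟩).trans (by linarith)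
  · -- enlarging `N` to at least `R` only increases the truncated integral
    refine le_trans ?_ (left (max N R) (le_max_right _ _) x h)
    refine mul_le_mul_of_nonneg_left ?_ (hpos x).le
    exact intervalIntegral.integral_mono_interval le_rfl hxN (le_max_left _ _)
      (Eventually.of_forall fun _ => (Real.exp_pos _).le)
      ((continuous_exp_neg_integral hqloc x).intervalIntegrable _ _)

/-! ### The improper integral and the two-sided bound -/

theorem lintegral_le_of_truncated_le (hqloc : LocallyIntegrable q volume) {x B : ℝ}
    (h : ∀ N, x ≤ N → ∫ t in x..N, Real.exp (-∫ ξ in x..t, q ξ) ≤ B) :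
    (∫⁻ t in Set.Ioi x, ENNReal.ofReal (Real.exp (-∫ ξ in x..t, q ξ))) ≤ ENNReal.ofReal B := by
  have hc := continuous_exp_neg_integral hqloc x
  have hev : ∀ᶠ N : ℝ in atTop, x ≤ N := eventually_ge_atTop x
  have hint : IntegrableOn (fun t => Real.exp (-∫ ξ in x..t, q ξ)) (Set.Ioi x) :=
    integrableOn_Ioi_of_intervalIntegral_norm_bounded B x
      (fun N => (hc.integrableOn_Icc (a := x) (b := N)).mono_set Set.Ioc_subset_Icc_self)
      tendsto_id (hev.mono fun N hN => by simpa [Real.norm_eq_abs, Real.abs_exp] using h N hN)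
  rw [← ofReal_integral_eq_lintegral_ofReal hint
    (Eventually.of_forall fun _ => (Real.exp_pos _).le)]
  exact ENNReal.ofReal_le_ofReal (le_of_tendsto
    (intervalIntegral_tendsto_integral_Ioi x hint tendsto_id) (hev.mono h))

theorem le_lintegral_of_integral_le (hq : ∀ x, 0 ≤ q x) (hqloc : LocallyIntegrable q volume)
    {x d B : ℝ} (h : ∫ ξ in x..(x + d), q ξ ≤ B) :
    ENNReal.ofReal (Real.exp (-B) * d) ≤
      ∫⁻ t in Set.Ioi x, ENNReal.ofReal (Real.exp (-∫ ξ in x..t, q ξ)) := by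
  calc ENNReal.ofReal (Real.exp (-B) * d)
      = ∫⁻ _ in Set.Ioc x (x + d), ENNReal.ofReal (Real.exp (-B)) := by
        rw [setLIntegral_const, Real.volume_Ioc, add_sub_cancel_left,
          ENNReal.ofReal_mul (Real.exp_pos _).le]
    _ ≤ ∫⁻ t in Set.Ioc x (x + d), ENNReal.ofReal (Real.exp (-∫ ξ in x..t, q ξ)) := by
        refine setLIntegral_mono' measurableSet_Ioc fun t ht => ?_
        refine ENNReal.ofReal_le_ofReal (Real.exp_le_exp.2 (neg_le_neg (le_trans ?_ h)))
        exact intervalIntegral.integral_mono_interval le_rfl ht.1.le ht.2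
          (Eventually.of_forall hq) hqloc.intervalIntegrable_real
    _ ≤ _ := lintegral_mono_set Set.Ioc_subset_Ioi_self

end

theorem stmt9 (q q₁ q₁' q₂ s : ℝ → ℝ)
    (hq : ∀ x, 0 ≤ q x) (hqloc : LocallyIntegrable q volume)
    (hsplit : ∀ x, q x = q₁ x + q₂ x)
    (hq₁pos : ∀ x, 0 < q₁ x)
    -- `q₁` is locally absolutely continuous with a.e. derivative `q₁'`
    (hq₁'loc : LocallyIntegrable q₁' volume)
    (hq₁AC : ∀ a b : ℝ, q₁ b - q₁ a = ∫ t in a..b, q₁' t)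
    (hq₂loc : LocallyIntegrable q₂ volume)
    (hscont : Continuous s) (hspos : ∀ x, 0 < s x)
    -- (a)
    (hsinf : Tendsto s (cocompact ℝ) atTop)
    -- (b)
    (hb : ∃ R : ℝ, ∀ᵐ x : ℝ ∂volume, R ≤ |x| → |q₁' x| / (q₁ x) ^ 2 ≤ 1 / s x)
    -- (c)
    (hc : Tendsto (fun x : ℝ => s x / (x * q₁ x)) (cocompact ℝ) (𝓝 0))
    -- (d)
    (hd : ∃ ν : ℝ, 1 ≤ ν ∧ ∃ R : ℝ, ∀ x : ℝ, R ≤ |x| →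
      ∀ t ∈ Set.Icc (x - s x / q₁ x) (x + s x / q₁ x),
        1 / ν ≤ s t / s x ∧ s t / s x ≤ ν)
    -- (e): `ϰ₀ = sup_x ϰ̃(x) < ∞`
    (he : ∃ K : ℝ, ∀ x : ℝ,
      sSup ((fun t => |q₁ t * ∫ ξ in x..t, q₂ ξ / q₁ ξ|) ''
        Set.Icc (x - s x / q₁ x) (x + s x / q₁ x)) ≤ K) :
    ∃ c : ℝ, 1 ≤ c ∧ ∀ x : ℝ,
      ENNReal.ofReal (c⁻¹ / q₁ x) ≤
        (∫⁻ t in Set.Ioi x, ENNReal.ofReal (Real.exp (-∫ ξ in x..t, q ξ))) ∧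
      (∫⁻ t in Set.Ioi x, ENNReal.ofReal (Real.exp (-∫ ξ in x..t, q ξ))) ≤
        ENNReal.ofReal (c / q₁ x) := by
  
  obtain ⟨Rb, hb⟩ := hb
  obtain ⟨ν, hν, Rd, hd⟩ := hd
  obtain ⟨K₀, he⟩ := he
  set K := max K₀ 0 with hK
  have hK0 : 0 ≤ K := le_max_right _ _
  set A := 4 * K + 4 with hA
  have hA1 : 1 ≤ A := by linarith
  have hA0 : 0 < A := by linarith
  have hν0 : 0 < ν := by linarith
  have hcont : Continuous q₁ := by
    have h : q₁ = fun u => (∫ v in (0 : ℝ)..u, q₁' v) + q₁ 0 := by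
      funext u
      rw [← hq₁AC 0 u]; ring
    rw [h]
    exact (intervalIntegral.continuous_primitive
      (fun _ _ => hq₁'loc.intervalIntegrable_real) 0).add continuous_const
  have hratio : ∀ a b : ℝ, IntervalIntegrable (fun v => q₂ v / q₁ v) volume a b := fun a b => by
    simp only [div_eq_mul_inv]
    exact hq₂loc.intervalIntegrable_real.mul_continuousOn
      (hcont.inv₀ fun u => (hq₁pos u).ne').continuousOn
  -- The real `sSup` is meaningful here since a continuous function is bounded on compact `Δ(x)`.
  have hG : ∀ x, ∀ t ∈ Set.Icc (x - s x / q₁ x) (x + s x / q₁ x),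
      |q₁ t * ∫ ξ in x..t, q₂ ξ / q₁ ξ| ≤ K := by
    intro x t ht
    have hc : Continuous fun t => |q₁ t * ∫ ξ in x..t, q₂ ξ / q₁ ξ| :=
      (hcont.mul (intervalIntegral.continuous_primitive hratio x)).abs
    exact (le_csSup (isCompact_Icc.bddAbove_image hc.continuousOn) ⟨t, ht, rfl⟩).trans
      ((he x).trans (le_max_left _ _))
  obtain ⟨R₁, hR₁⟩ : ∃ R₁ : ℝ, ∀ x : ℝ, R₁ ≤ |x| → 3 * ν * A ≤ s x ∧
      |s x / (x * q₁ x)| ≤ 1 / 2 := by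
    have h1 := hsinf.eventually_ge_atTop (3 * ν * A)
    have h2 : ∀ᶠ x in cocompact ℝ, |s x / (x * q₁ x)| ≤ 1 / 2 := by
      filter_upwards [hc.eventually (Metric.closedBall_mem_nhds 0 (by norm_num : (0:ℝ) < 1 / 2))]
        with x hx
      rwa [Real.dist_eq, sub_zero] at hx
    have h3 := h1.and h2
    rw [← Metric.cobounded_eq_cocompact, hasBasis_cobounded_norm.eventually_iff] at h3
    obtain ⟨R₁, -, h⟩ := h3
    exact ⟨R₁, fun x hx => h hx⟩
  set R := max (max R₁ Rd) (max (2 * Rb) 1) with hR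
  have hR1 : 1 ≤ R := (le_max_right _ _).trans (le_max_right _ _)
  have hR0 : 0 < R := by linarith
  have hdelta : ∀ x, R ≤ |x| → A / q₁ x ≤ s x / q₁ x ∧ s x / q₁ x ≤ |x| / 2 := by
    intro x hx
    obtain ⟨h1, h2⟩ := hR₁ x (((le_max_left _ _).trans (le_max_left _ _)).trans hx)
    have hqx := hq₁pos x
    have hx0 : 0 < |x| := hR0.trans_le hx
    constructor
    · gcongr
      nlinarith
    · rw [abs_div, abs_mul, abs_of_pos hqx, abs_of_pos (hspos x), ← div_div,
        div_right_comm, div_le_iff₀ hx0] at h2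
      linarith
  have hlocal : ∀ x, R ≤ |x| → ∀ t ∈ Set.Icc x (x + A / q₁ x),
      3 / 4 * q₁ x ≤ q₁ t ∧ q₁ t ≤ 3 / 2 * q₁ x ∧ |∫ v in x..t, q₂ v| ≤ 2 * K := by
    intro x hx t ht
    obtain ⟨h1, -⟩ := hR₁ x (((le_max_left _ _).trans (le_max_left _ _)).trans hx)
    obtain ⟨hd1, hd2⟩ := hdelta x hx
    have hsx := hspos x
    have hqx := hq₁pos x
    have hmem : ∀ u ∈ Set.Icc x (x + A / q₁ x),
        u ∈ Set.Icc (x - s x / q₁ x) (x + s x / q₁ x) := fun u hu =>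
      ⟨by linarith [hu.1, div_pos hsx hqx], by linarith [hu.2]⟩
    refine local_control (L := ν / s x) hq₁pos hcont hq₁'loc hq₁AC hq₂loc (by positivity) hK0 ?_ ?_
      (fun u hu => hG x u (hmem u hu)) ht
    · rw [div_mul_eq_mul_div, div_le_iff₀ hsx]
      linarith
    · filter_upwards [hb] with u hu hux
      have hbig : Rb ≤ |u| := by
        have h2 : 2 * Rb ≤ |x| := ((le_max_left _ _).trans (le_max_right _ _)).trans hx
        have h3 : |x| - |u| ≤ |x - u| := abs_sub_abs_le_abs_sub x u
        have h4 : |x - u| ≤ |x| / 2 := by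
          rw [abs_sub_comm, abs_of_nonneg (by linarith [hux.1])]
          linarith [hux.2]
        linarith
      refine (hu hbig).trans ?_
      have h5 := (hd x (((le_max_right _ _).trans (le_max_left _ _)).trans hx) u (hmem u hux)).1
      rw [div_le_div_iff₀ hν0 hsx] at h5
      rw [div_le_div_iff₀ (hspos u) hsx]
      linarith
  have hqint : ∀ x t, ∫ v in x..t, q v = (∫ v in x..t, q₁ v) + ∫ v in x..t, q₂ v := by
    intro x t
    rw [← intervalIntegral.integral_add (hcont.intervalIntegrable x t)
      hq₂loc.intervalIntegrable_real]
    simp_rw [hsplit]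
  -- With `A = 4K + 4`, a step satisfies `∫ q ≥ (3/4)A - 2K = K + 3 ≥ 3`, hence `exp (-∫ q) ≤ 1/3`.
  obtain ⟨C, hC⟩ := exists_truncated_bound hq hqloc hq₁pos hcont hR0 hA0 (by
    intro x hx
    have hqx := hq₁pos x
    have hAq : 0 < A / q₁ x := div_pos hA0 hqx
    have hle : x ≤ x + A / q₁ x := by linarith
    obtain ⟨h1, -, h3⟩ := hlocal x hx _ (Set.right_mem_Icc.2 hle)
    obtain ⟨hd1, hd2⟩ := hdelta x hx
    refine ⟨by linarith, ?_, fun hx0 => ?_⟩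
    · have h4 : 3 / 4 * A ≤ ∫ v in x..(x + A / q₁ x), q₁ v := by
        have := intervalIntegral.integral_mono_on (f := fun _ => 3 / 4 * q₁ x) (μ := volume) hle
          intervalIntegrable_const (hcont.intervalIntegrable _ _)
          (fun t ht => (hlocal x hx t ht).1)
        rw [intervalIntegral.integral_const, smul_eq_mul, add_sub_cancel_left] at this
        refine le_trans (le_of_eq ?_) this
        field_simp
      have h5 : 3 ≤ ∫ v in x..(x + A / q₁ x), q v := by
        rw [hqint]
        linarith [(abs_le.1 h3).1]
      have h6 : (3 : ℝ) ≤ Real.exp (∫ v in x..(x + A / q₁ x), q v) := by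
        linarith [Real.add_one_le_exp (∫ v in x..(x + A / q₁ x), q v)]
      rw [Real.exp_neg, ← one_div]
      exact one_div_le_one_div_of_le (by norm_num) h6
    · rw [abs_of_neg hx0] at hd2
      linarith)
  -- Lower bound far out, on a window of length `1 / q₁ x`.
  have hlowfar : ∀ x, R ≤ |x| → ENNReal.ofReal (Real.exp (-(3 / 2 + 2 * K)) * (1 / q₁ x)) ≤
      ∫⁻ t in Set.Ioi x, ENNReal.ofReal (Real.exp (-∫ ξ in x..t, q ξ)) := by
    intro x hx
    have hqx := hq₁pos x
    have hle : x ≤ x + 1 / q₁ x := by linarith [div_pos one_pos hqx]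
    have hsub : x + 1 / q₁ x ≤ x + A / q₁ x := by gcongr
    have h3 := (hlocal x hx _ ⟨hle, hsub⟩).2.2
    refine le_lintegral_of_integral_le hq hqloc ?_
    have h4 : ∫ v in x..(x + 1 / q₁ x), q₁ v ≤ 3 / 2 := by
      have := intervalIntegral.integral_mono_on (g := fun _ => 3 / 2 * q₁ x) (μ := volume) hle
        (hcont.intervalIntegrable _ _) intervalIntegrable_const
        (fun t ht => (hlocal x hx t ⟨ht.1, ht.2.trans hsub⟩).2.1)
      rw [intervalIntegral.integral_const, smul_eq_mul, add_sub_cancel_left] at this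
      refine this.trans (le_of_eq ?_)
      field_simp
    rw [hqint]
    linarith [(abs_le.1 h3).2]
  -- Lower bound on the compact part, on a window of length `1`.
  set B := ∫ v in (-R)..(R + 1), q v with hB
  have hlownear : ∀ x, |x| ≤ R → ENNReal.ofReal (Real.exp (-B) * 1) ≤
      ∫⁻ t in Set.Ioi x, ENNReal.ofReal (Real.exp (-∫ ξ in x..t, q ξ)) := by
    intro x hx
    refine le_lintegral_of_integral_le hq hqloc ?_
    exact intervalIntegral.integral_mono_interval (abs_le.1 hx).1 (by linarith)
      (by linarith [(abs_le.1 hx).2]) (Eventually.of_forall hq) hqloc.intervalIntegrable_real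
  obtain ⟨M, hM⟩ := (isCompact_Icc (a := -R) (b := R)).bddAbove_image
    (f := fun x => 1 / q₁ x) (continuous_const.div hcont fun u => (hq₁pos u).ne').continuousOn
  set c := max (max 1 C) (max (Real.exp (3 / 2 + 2 * K)) (M * Real.exp B)) with hc'
  have hc1 : 1 ≤ c := (le_max_left _ _).trans (le_max_left _ _)
  have hc0 : 0 < c := by linarith
  refine ⟨c, hc1, fun x => ⟨?_, ?_⟩⟩
  · have hqx := hq₁pos x
    rcases le_total R |x| with hx | hx
    · refine le_trans (ENNReal.ofReal_le_ofReal ?_) (hlowfar x hx)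
      rw [Real.exp_neg, div_eq_mul_one_div]
      have : Real.exp (3 / 2 + 2 * K) ≤ c := (le_max_left _ _).trans (le_max_right _ _)
      gcongr
    · refine le_trans (ENNReal.ofReal_le_ofReal ?_) (hlownear x hx)
      have h1 : 1 / q₁ x ≤ M := hM ⟨x, abs_le.1 hx, rfl⟩
      have h2 : M * Real.exp B ≤ c := (le_max_right _ _).trans (le_max_right _ _)
      have h3 : 1 / q₁ x * Real.exp B ≤ c := le_trans (by gcongr) h2
      rw [mul_one, Real.exp_neg, div_eq_mul_one_div, inv_mul_le_iff₀ hc0,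
        ← div_eq_mul_inv, le_div_iff₀ (Real.exp_pos B)]
      exact h3
  · refine lintegral_le_of_truncated_le hqloc fun N hN => ?_
    rw [le_div_iff₀ (hq₁pos x), mul_comm]
    exact (hC x N hN).trans ((le_max_right _ _).trans (le_max_left _ _))
end

section
/- Under hypotheses (a)–(d) together with ϰ̃(x) → 0 as |x| → ∞, the asymptotic formula q₁(x) · ∫_x^∞ exp(−∫_x^t q(ξ) dξ) dt → 1 as |x| → ∞ holds; that is, ∫_x^∞ exp(−∫_x^t q(ξ) dξ) dt = (1 + ε(x))/q₁(x) with ε(x) → 0 as |x| → ∞. -/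
open MeasureTheory Filter Topology
open scoped ENNReal

/-!
Write `J(x, T) = ∫_x^T exp(-∫_x^t q) dt`, so that the integral in question is `lim_{T → ∞} J(x, T)`.

On an interval `[x, x + L / q₁ x]` with `L` fixed and `|x|` large, `q` behaves like the constant
`q₁ x`. Indeed the interval lies in `Δ(x)`, where `|q₁'| ≤ (ν / s x) q₁²`; hence `1 / q₁` is
Lipschitz there with constant `ν / s x → 0` and `q₁ t = q₁ x (1 + o(1))`. Writing
`W(t) = ∫_x^t q₂ / q₁`, integration by parts gives `∫_x^t q₂ = q₁ W - ∫_x^t q₁' W`, and both terms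
are small because `q₁ W` is bounded by `ϰ̃(x)`. This is `local_estimate`, in asymptotic form
`eventually_local_estimate`; hypothesis (c) is what keeps `Δ(x)` away from the origin.

It remains to control the tail. Splitting at `y = x + L / q₁ x` gives
`q₁ x J(x, T) ≤ L + exp(-∫_x^y q) (q₁ x / q₁ y) · q₁ y J(y, T)`, and for `L = 3` and `|x|` large the
factor in front of `q₁ y J(y, T)` is at most `1 / 2`. Since `q ≥ 0`, the function `q₁ J(·, T)` is
bounded on `[a, T]`, and the self-improving inequality then bounds it by a constant independent of
`a` and `T` (`exists_bound_truncInt`). With this bound available, the same splitting for large `L`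
has the main term `1 - exp(-L)`, up to a small relative error, and a remainder `O(exp(-L))`
(`truncInt_two_sided`). Letting `T → ∞` and then choosing `L` large proves the claim
(`tendsto_of_local`).
-/

/-! ### Absolutely continuous functions given by a primitive -/

lemma locallyIntegrable_intervalIntegrable {f : ℝ → ℝ} (hf : LocallyIntegrable f volume)
    (a b : ℝ) : IntervalIntegrable f volume a b :=
  intervalIntegrable_iff.mpr <|
    (hf.integrableOn_isCompact isCompact_uIcc).mono_set Set.uIoc_subset_uIcc

lemma absolutelyContinuousOnInterval_of_eq_integral {f f' : ℝ → ℝ}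
    (hf' : LocallyIntegrable f' volume)
    (hf : ∀ a b : ℝ, f b - f a = ∫ t in a..b, f' t) (a b : ℝ) :
    AbsolutelyContinuousOnInterval f a b := by
  have h := (locallyIntegrable_intervalIntegrable hf' a
    b).absolutelyContinuousOnInterval_intervalIntegral (c := a) Set.left_mem_uIcc
  have hconst : AbsolutelyContinuousOnInterval (fun _ : ℝ => f a) a b :=
    (LipschitzWith.const (f a)).lipschitzOnWith.absolutelyContinuousOnInterval
  have h2 := h.fun_add hconst
  convert! h2 using 2 with x
  rw [← hf a x]; ring

lemma ae_hasDerivAt_of_eq_integral {f f' : ℝ → ℝ}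
    (hf' : LocallyIntegrable f' volume)
    (hf : ∀ a b : ℝ, f b - f a = ∫ t in a..b, f' t) :
    ∀ᵐ x, HasDerivAt f (f' x) x := by
  filter_upwards [_root_.LocallyIntegrable.ae_hasDerivAt_integral hf'] with x hx
  have h := (hx 0).add_const (f 0)
  convert! h using 1
  ext y
  rw [← hf 0 y]; ring

lemma AbsolutelyContinuousOnInterval.inv_of_pos {f : ℝ → ℝ} {a b : ℝ}
    (hf : AbsolutelyContinuousOnInterval f a b) (hpos : ∀ x, 0 < f x) :
    AbsolutelyContinuousOnInterval (fun x => (f x)⁻¹) a b := by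
  obtain ⟨C, hC⟩ := IsCompact.exists_bound_of_continuousOn (isCompact_uIcc (a := a) (b := b))
    (hf.continuousOn.inv₀ fun x _ => (hpos x).ne')
  have hC0 : 0 ≤ C := (norm_nonneg _).trans (hC a Set.left_mem_uIcc)
  unfold AbsolutelyContinuousOnInterval at hf ⊢
  apply squeeze_zero' ?_ ?_ (by simpa using (hf.const_mul (C * C)))
  · exact Eventually.of_forall fun _ => Finset.sum_nonneg fun i hi => dist_nonneg
  rw [eventually_inf_principal]
  filter_upwards with (n, I) hnI
  rw [Finset.mul_sum]
  refine Finset.sum_le_sum fun i hi => ?_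
  have h1 := hC _ (hnI.left i hi |>.left)
  have h2 := hC _ (hnI.left i hi |>.right)
  have p1 := hpos (I i).1
  have p2 := hpos (I i).2
  simp only [Real.norm_eq_abs, Pi.inv_apply] at h1 h2
  rw [Real.dist_eq, Real.dist_eq]
  have e : (f (I i).1)⁻¹ - (f (I i).2)⁻¹
      = -((f (I i).1)⁻¹ * (f (I i).2)⁻¹ * (f (I i).1 - f (I i).2)) := by
    field_simp
    ring
  rw [e, abs_neg, abs_mul, abs_mul]
  gcongr

/-- The bound `|f'| ≤ c f²` says that the derivative of `1 / f` is at most `c` in absolute value. -/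
lemma abs_inv_sub_inv_le {f f' : ℝ → ℝ} (hf' : LocallyIntegrable f' volume)
    (hf : ∀ a b : ℝ, f b - f a = ∫ t in a..b, f' t) (hpos : ∀ x, 0 < f x) {x y c : ℝ}
    (hxy : x ≤ y) (hb : ∀ᵐ t, t ∈ Set.Icc x y → |f' t| ≤ c * f t ^ 2) :
    |(f y)⁻¹ - (f x)⁻¹| ≤ c * (y - x) := by
  have hAC := (absolutelyContinuousOnInterval_of_eq_integral hf' hf x y).inv_of_pos hpos
  rw [← hAC.integral_deriv_eq_sub]
  have := intervalIntegral.norm_integral_le_of_norm_le_const_ae (a := x) (b := y) (C := c)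
    (f := deriv fun x => (f x)⁻¹) ?_
  · rwa [Real.norm_eq_abs, abs_of_nonneg (sub_nonneg.2 hxy)] at this
  filter_upwards [hb, ae_hasDerivAt_of_eq_integral hf' hf] with t ht hd hm
  rw [Set.uIoc_of_le hxy] at hm
  have h1 := ht (Set.Ioc_subset_Icc_self hm)
  rw [(hd.fun_inv (hpos t).ne').deriv, Real.norm_eq_abs, abs_div, abs_neg, abs_of_pos
    (pow_pos (hpos t) 2), div_le_iff₀ (pow_pos (hpos t) 2)]
  exact h1

/-- Integration by parts against the primitive `r ↦ ∫_x^r g`, which vanishes at `x`. -/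
lemma integral_mul_eq_of_primitive {f f' g : ℝ → ℝ} (hf' : LocallyIntegrable f' volume)
    (hf : ∀ a b : ℝ, f b - f a = ∫ t in a..b, f' t) (hg : LocallyIntegrable g volume) (x t : ℝ) :
    ∫ r in x..t, f r * g r
      = f t * (∫ r in x..t, g r) - ∫ r in x..t, f' r * ∫ ξ in x..r, g ξ := by
  have hf2 := absolutelyContinuousOnInterval_of_eq_integral hf' hf x t
  have hg2 := (locallyIntegrable_intervalIntegrable hg x
    t).absolutelyContinuousOnInterval_intervalIntegral (c := x) Set.left_mem_uIcc
  have key := hf2.integral_mul_deriv_eq_deriv_mul hg2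
  rw [intervalIntegral.integral_same, mul_zero, sub_zero] at key
  have hdg := _root_.LocallyIntegrable.ae_hasDerivAt_integral hg
  have hdf := ae_hasDerivAt_of_eq_integral hf' hf
  rw [intervalIntegral.integral_congr_ae (g := fun r => f r * g r),
    intervalIntegral.integral_congr_ae (f := fun r => deriv f r * _)
      (g := fun r => f' r * ∫ ξ in x..r, g ξ)] at key
  · exact key
  · filter_upwards [hdf] with r hr _
    rw [hr.deriv]
  · filter_upwards [hdg] with r hr _
    rw [(hr x).deriv]

/-! ### The local comparison of `q` with a constant -/

/-- On an interval of length at most `L / q₁ x` the function `q₁` is nearly constant and the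
contribution of `q₂` to `∫ q` is negligible, with explicit error terms. -/
lemma local_estimate {q q₁ q₁' q₂ : ℝ → ℝ}
    (hsplit : ∀ x, q x = q₁ x + q₂ x) (hq₁pos : ∀ x, 0 < q₁ x)
    (hq₁'loc : LocallyIntegrable q₁' volume)
    (hq₁AC : ∀ a b : ℝ, q₁ b - q₁ a = ∫ t in a..b, q₁' t)
    (hq₁c : Continuous q₁)
    (hq₂loc : LocallyIntegrable q₂ volume) {x y c κ L : ℝ} (hxy : x ≤ y)
    (hL : q₁ x * (y - x) ≤ L) (hc : 0 ≤ c) (hcL : c * L ≤ 1 / 2) (hκ : 0 ≤ κ)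
    (hb : ∀ᵐ t, t ∈ Set.Icc x y → |q₁' t| ≤ c * q₁ t ^ 2)
    (hW : ∀ t ∈ Set.Icc x y, |q₁ t * ∫ ξ in x..t, q₂ ξ / q₁ ξ| ≤ κ) :
    ∀ t ∈ Set.Icc x y, |q₁ x / q₁ t - 1| ≤ c * L ∧
      |(∫ ξ in x..t, q ξ) - q₁ x * (t - x)| ≤ 2 * (c * L) * L + 2 * κ := by
  have px := hq₁pos x
  have hL0 : 0 ≤ L := le_trans (mul_nonneg px.le (sub_nonneg.2 hxy)) hL
  have hratio : ∀ t ∈ Set.Icc x y, |q₁ x / q₁ t - 1| ≤ c * L := by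
    intro t ht
    have h := abs_inv_sub_inv_le hq₁'loc hq₁AC hq₁pos (x := x) (y := t) (c := c) ht.1
      (by filter_upwards [hb] with r hr hm using hr ⟨hm.1, hm.2.trans ht.2⟩)
    have e : q₁ x / q₁ t - 1 = q₁ x * ((q₁ t)⁻¹ - (q₁ x)⁻¹) := by
      have := (hq₁pos t).ne'
      field_simp
    rw [e, abs_mul, abs_of_pos px]
    calc q₁ x * |(q₁ t)⁻¹ - (q₁ x)⁻¹| ≤ q₁ x * (c * (t - x)) := by gcongr
      _ = c * (q₁ x * (t - x)) := by ring
      _ ≤ c * (q₁ x * (y - x)) := by gcongr; exact ht.2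
      _ ≤ c * L := by gcongr
  have htwo : ∀ t ∈ Set.Icc x y, q₁ t ≤ 2 * q₁ x := by
    intro t ht
    have h := (abs_le.1 ((hratio t ht).trans hcL)).1
    have h2 : 1 / 2 ≤ q₁ x / q₁ t := by linarith
    rw [le_div_iff₀ (hq₁pos t)] at h2
    linarith
  intro t ht
  refine ⟨hratio t ht, ?_⟩
  have hii : ∀ {f : ℝ → ℝ}, LocallyIntegrable f volume → IntervalIntegrable f volume x t :=
    fun hf => locallyIntegrable_intervalIntegrable hf x t
  have htL : q₁ x * (t - x) ≤ L := le_trans (by gcongr; exact ht.2) hL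
  have hQ1 : |(∫ ξ in x..t, q₁ ξ) - q₁ x * (t - x)| ≤ 2 * (c * L) * L := by
    have e : (∫ ξ in x..t, q₁ ξ) - q₁ x * (t - x) = ∫ ξ in x..t, (q₁ ξ - q₁ x) := by
      rw [intervalIntegral.integral_sub (hq₁c.intervalIntegrable _ _) (by simp)]
      simp [mul_comm]
    rw [e]
    have := intervalIntegral.norm_integral_le_of_norm_le_const (a := x) (b := t)
      (C := c * L * (2 * q₁ x)) (f := fun ξ => q₁ ξ - q₁ x) (fun r hr => by
        rw [Set.uIoc_of_le ht.1] at hr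
        have hr' : r ∈ Set.Icc x y := ⟨hr.1.le, hr.2.trans ht.2⟩
        have pr := hq₁pos r
        have e : q₁ r - q₁ x = -((q₁ x / q₁ r - 1) * q₁ r) := by field_simp; ring
        rw [e, Real.norm_eq_abs, abs_neg, abs_mul, abs_of_pos pr]
        gcongr
        exacts [hratio r hr', htwo r hr'])
    rw [Real.norm_eq_abs, abs_of_nonneg (sub_nonneg.2 ht.1)] at this
    calc _ ≤ _ := this
      _ = 2 * (c * L) * (q₁ x * (t - x)) := by ring
      _ ≤ _ := by gcongr
  have hgloc : LocallyIntegrable (fun ξ => q₂ ξ / q₁ ξ) volume := by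
    have := hq₂loc.mul_continuous (hq₁c.inv₀ fun x => (hq₁pos x).ne')
    simpa [div_eq_mul_inv] using this
  have hQ2 : |∫ ξ in x..t, q₂ ξ| ≤ 2 * κ := by
    have e := integral_mul_eq_of_primitive hq₁'loc hq₁AC hgloc x t
    have e2 : ∀ r, q₁ r * (q₂ r / q₁ r) = q₂ r := fun r => by
      rw [mul_div_cancel₀]; exact (hq₁pos r).ne'
    simp only [e2] at e
    rw [e]
    have := intervalIntegral.norm_integral_le_of_norm_le_const_ae (a := x) (b := t)
      (C := c * κ * (2 * q₁ x)) (f := fun r => q₁' r * ∫ ξ in x..r, q₂ ξ / q₁ ξ) (by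
        filter_upwards [hb] with r hbr hr
        rw [Set.uIoc_of_le ht.1] at hr
        have hr' : r ∈ Set.Icc x y := ⟨hr.1.le, hr.2.trans ht.2⟩
        have pr := hq₁pos r
        have h1 := hbr hr'
        have h2 := hW r hr'
        rw [abs_mul, abs_of_pos pr] at h2
        rw [Real.norm_eq_abs, abs_mul]
        calc _ ≤ c * q₁ r ^ 2 * |∫ ξ in x..r, q₂ ξ / q₁ ξ| := by gcongr
          _ = c * (q₁ r * |∫ ξ in x..r, q₂ ξ / q₁ ξ|) * q₁ r := by ring
          _ ≤ c * κ * (2 * q₁ x) := by gcongr; exact htwo r hr')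
    rw [Real.norm_eq_abs, abs_of_nonneg (sub_nonneg.2 ht.1)] at this
    have h3 : c * κ * (2 * q₁ x) * (t - x) ≤ κ := by
      calc _ = κ * (2 * (c * (q₁ x * (t - x)))) := by ring
        _ ≤ κ * (2 * (c * L)) := by gcongr
        _ ≤ κ * 1 := by gcongr; linarith
        _ = κ := mul_one _
    calc _ ≤ _ := abs_sub _ _
      _ ≤ κ + κ := add_le_add (hW t ht) (this.trans h3)
      _ = _ := by ring
  have e : (∫ ξ in x..t, q ξ) = (∫ ξ in x..t, q₁ ξ) + ∫ ξ in x..t, q₂ ξ := by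
    rw [← intervalIntegral.integral_add (hq₁c.intervalIntegrable _ _) (hii hq₂loc)]
    simp only [hsplit]
  rw [e, add_sub_right_comm]
  exact (abs_add_le _ _).trans (add_le_add hQ1 hQ2)

/-! ### The truncated integral -/

/-- The truncation `J(x, T) = ∫_x^T exp(-∫_x^t q) dt`; an interval integral, hence signed for
`T < x`. -/
noncomputable def truncInt (q : ℝ → ℝ) (x T : ℝ) : ℝ :=
  ∫ t in x..T, Real.exp (-∫ ξ in x..t, q ξ)

section
variable {q : ℝ → ℝ}

lemma continuous_exp_neg_primitive (hq : ∀ a b, IntervalIntegrable q volume a b) (x : ℝ) :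
    Continuous fun t => Real.exp (-∫ ξ in x..t, q ξ) :=
  Real.continuous_exp.comp (intervalIntegral.continuous_primitive hq x).neg

lemma truncInt_nonneg {x T : ℝ} (h : x ≤ T) : 0 ≤ truncInt q x T :=
  intervalIntegral.integral_nonneg h fun _ _ => (Real.exp_pos _).le

lemma exp_neg_primitive_le_one (hq0 : ∀ x, 0 ≤ q x) {x t : ℝ} (h : x ≤ t) :
    Real.exp (-∫ ξ in x..t, q ξ) ≤ 1 := by
  rw [Real.exp_le_one_iff, neg_nonpos]
  exact intervalIntegral.integral_nonneg h fun _ _ => hq0 _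

lemma truncInt_le (hq : ∀ a b, IntervalIntegrable q volume a b) (hq0 : ∀ x, 0 ≤ q x) {x T : ℝ}
    (h : x ≤ T) : truncInt q x T ≤ T - x := by
  have := intervalIntegral.integral_mono_on h
    ((continuous_exp_neg_primitive hq x).intervalIntegrable x T)
    (intervalIntegrable_const : IntervalIntegrable (fun _ => (1 : ℝ)) volume x T)
    fun t ht => exp_neg_primitive_le_one hq0 ht.1
  simpa [truncInt] using this

lemma truncInt_split (hq : ∀ a b, IntervalIntegrable q volume a b) (x y T : ℝ) :
    truncInt q x T
      = truncInt q x y + Real.exp (-∫ ξ in x..y, q ξ) * truncInt q y T := by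
  unfold truncInt
  rw [← intervalIntegral.integral_add_adjacent_intervals
    ((continuous_exp_neg_primitive hq x).intervalIntegrable x y)
    ((continuous_exp_neg_primitive hq x).intervalIntegrable y T),
    ← intervalIntegral.integral_const_mul]
  congr 1
  refine intervalIntegral.integral_congr fun t _ => ?_
  rw [← Real.exp_add, ← intervalIntegral.integral_add_adjacent_intervals (hq x y) (hq y t)]
  ring_nf

/-- A bounded function satisfying `f x ≤ A + f y / 2` at every point where it is not already
controlled obeys a bound depending on `K` and `A` only: compare `f` with its supremum. -/
lemma le_of_self_improving {S : Set ℝ} {f : ℝ → ℝ} {K A : ℝ} (hbdd : BddAbove (f '' S))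
    (hA : 0 ≤ A) (h : ∀ x ∈ S, f x ≤ K ∨ f x ≤ A ∨ ∃ y ∈ S, f x ≤ A + f y / 2) :
    ∀ x ∈ S, f x ≤ max K (2 * A) := by
  intro x hx
  set M := sSup (f '' S) with hM
  have hle : ∀ y ∈ S, f y ≤ M := fun y hy => le_csSup hbdd ⟨y, hy, rfl⟩
  refine (hle x hx).trans ?_
  have h2 : M ≤ max K (max A (A + M / 2)) := by
    refine csSup_le ⟨_, x, hx, rfl⟩ ?_
    rintro _ ⟨y, hy, rfl⟩
    rcases h y hy with h1 | h1 | ⟨z, hz, h1⟩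
    · exact le_max_of_le_left h1
    · exact le_max_of_le_right (le_max_of_le_left h1)
    · refine le_max_of_le_right (le_max_of_le_right (h1.trans ?_))
      linarith [hle z hz]
  rcases le_max_iff.1 h2 with h3 | h3
  · exact le_max_of_le_left h3
  · refine le_max_of_le_right ?_
    rcases le_max_iff.1 h3 with h4 | h4 <;> linarith

/-- Splitting the truncated integral at `y = x + L / q₁ x`; the first alternative covers the case
in which `T` comes before `y`. -/
lemma truncInt_step {q₁ : ℝ → ℝ} (hq : ∀ a b, IntervalIntegrable q volume a b)
    (hq0 : ∀ x, 0 ≤ q x) (hq₁pos : ∀ x, 0 < q₁ x) {x L T : ℝ} (hL : 0 ≤ L)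
    (hstep : Real.exp (-∫ ξ in x..(x + L / q₁ x), q ξ) * (q₁ x / q₁ (x + L / q₁ x)) ≤ 1 / 2)
    (hxT : x ≤ T) :
    q₁ x * truncInt q x T ≤ L ∨ ∃ y ∈ Set.Icc x T,
      q₁ x * truncInt q x T ≤ L + q₁ y * truncInt q y T / 2 := by
  have px := hq₁pos x
  set y := x + L / q₁ x with hy
  have hxy : x ≤ y := by rw [hy]; have := div_nonneg hL px.le; linarith
  have hyx : q₁ x * (y - x) = L := by rw [hy]; field_simp; ring
  have py := hq₁pos y
  rcases le_total T y with h | h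
  · left
    calc q₁ x * truncInt q x T ≤ q₁ x * (T - x) := by gcongr; exact truncInt_le hq hq0 hxT
      _ ≤ q₁ x * (y - x) := by gcongr
      _ = L := hyx
  · right
    refine ⟨y, ⟨hxy, h⟩, ?_⟩
    have hJ : 0 ≤ q₁ y * truncInt q y T := mul_nonneg py.le (truncInt_nonneg h)
    have h1 : q₁ x * truncInt q x y ≤ L := by
      rw [← hyx]; gcongr; exact truncInt_le hq hq0 hxy
    rw [truncInt_split hq x y T]
    have e : q₁ x * (truncInt q x y + Real.exp (-∫ ξ in x..y, q ξ) * truncInt q y T)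
      = q₁ x * truncInt q x y + Real.exp (-∫ ξ in x..y, q ξ) * (q₁ x / q₁ y)
        * (q₁ y * truncInt q y T) := by field_simp
    rw [e]
    have := mul_le_mul_of_nonneg_right hstep hJ
    linarith

/-- The bound is uniform in `x` and `T`. The region `|x| ≤ R`, where no contraction is available, is
reduced to the half-line `[R, ∞)`, on which the contraction argument applies by itself. -/
lemma exists_bound_truncInt {q₁ : ℝ → ℝ} (hq : ∀ a b, IntervalIntegrable q volume a b)
    (hq0 : ∀ x, 0 ≤ q x) (hq₁pos : ∀ x, 0 < q₁ x) (hq₁c : Continuous q₁) {L R : ℝ} (hL : 0 ≤ L)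
    (hstep : ∀ x, R ≤ |x| →
      Real.exp (-∫ ξ in x..(x + L / q₁ x), q ξ) * (q₁ x / q₁ (x + L / q₁ x)) ≤ 1 / 2) :
    ∃ C, ∀ x T, x ≤ T → q₁ x * truncInt q x T ≤ C := by
  have hbdd : ∀ a T, BddAbove ((fun x => q₁ x * truncInt q x T) '' Set.Icc a T) := by
    intro a T
    obtain ⟨B, hB⟩ := (isCompact_Icc (a := a) (b := T)).bddAbove_image
      (f := fun x => q₁ x * (T - x)) (by fun_prop)
    refine ⟨B, ?_⟩
    rintro _ ⟨x, hx, rfl⟩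
    refine le_trans ?_ (hB ⟨x, hx, rfl⟩)
    have := (hq₁pos x).le
    simp only
    gcongr
    exact truncInt_le hq hq0 hx.2
  -- on `[R, T]` every point satisfies the contraction inequality, so no `K` is needed
  have hright : ∀ T, R ≤ T → q₁ R * truncInt q R T ≤ 2 * L := by
    intro T hT
    have := le_of_self_improving (K := 0) (A := L) (hbdd R T) hL (fun x hx => by
      right
      have hx' : R ≤ |x| := hx.1.trans (le_abs_self x)
      rcases truncInt_step hq hq0 hq₁pos hL (hstep x hx') hx.2 with h | ⟨y, hy, h⟩
      · exact Or.inl h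
      · exact Or.inr ⟨y, ⟨hx.1.trans hy.1, hy.2⟩, h⟩) R ⟨le_rfl, hT⟩
    rwa [max_eq_right (by positivity)] at this
  obtain ⟨Q, hQ⟩ := (isCompact_Icc (a := -R) (b := R)).bddAbove_image (f := q₁) hq₁c.continuousOn
  have pR := hq₁pos R
  have hmid : ∀ x T, |x| ≤ R → x ≤ T → q₁ x * truncInt q x T ≤ Q * (2 * R + 2 * L / q₁ R) := by
    intro x T hx hxT
    have hx' := abs_le.1 hx
    have hQx : q₁ x ≤ Q := hQ ⟨x, hx', rfl⟩
    have px := hq₁pos x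
    have hJ := truncInt_nonneg (q := q) hxT
    have : truncInt q x T ≤ 2 * R + 2 * L / q₁ R := by
      rcases le_total T R with h | h
      · have := truncInt_le hq hq0 hxT
        have : 0 ≤ 2 * L / q₁ R := by positivity
        linarith [hx'.1]
      · rw [truncInt_split hq x R T]
        have h1 := truncInt_le hq hq0 hx'.2
        have h2 := exp_neg_primitive_le_one hq0 hx'.2
        have h3 : truncInt q R T ≤ 2 * L / q₁ R := by
          rw [le_div_iff₀ pR, mul_comm]; exact hright T h
        have h4 := truncInt_nonneg (q := q) h
        have h5 := mul_le_mul_of_nonneg_right h2 h4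
        linarith [hx'.1]
    have hQ0 := px.le.trans hQx
    gcongr
  refine ⟨max (Q * (2 * R + 2 * L / q₁ R)) (2 * L), ?_⟩
  intro x T hxT
  refine le_of_self_improving (hbdd x T) hL (fun z hz => ?_) x ⟨le_rfl, hxT⟩
  rcases le_total |z| R with h | h
  · exact Or.inl (hmid z T h hz.2)
  · right
    rcases truncInt_step hq hq0 hq₁pos hL (hstep z h) hz.2 with h | ⟨y, hy, h⟩
    · exact Or.inl h
    · exact Or.inr ⟨y, ⟨hz.1.trans hy.1, hy.2⟩, h⟩

/-- A bound on the truncations makes the improper integral converge, so that taking `toReal` of the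
lower Lebesgue integral loses nothing. -/
lemma tendsto_truncInt (hq : ∀ a b, IntervalIntegrable q volume a b) {x B : ℝ}
    (hB : ∀ T, x ≤ T → truncInt q x T ≤ B) :
    Tendsto (fun T => truncInt q x T) atTop
      (𝓝 (∫⁻ t in Set.Ioi x, ENNReal.ofReal (Real.exp (-∫ ξ in x..t, q ξ))).toReal) := by
  have hc := continuous_exp_neg_primitive hq x
  have hint : IntegrableOn (fun t => Real.exp (-∫ ξ in x..t, q ξ)) (Set.Ioi x) := by
    refine integrableOn_Ioi_of_intervalIntegral_norm_bounded B x (b := id) (l := atTop)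
      (fun i => hc.integrableOn_Ioc) tendsto_id ?_
    filter_upwards [eventually_ge_atTop x] with T hT
    simpa [truncInt] using hB T hT
  have := intervalIntegral_tendsto_integral_Ioi x hint tendsto_id
  rwa [integral_eq_lintegral_of_nonneg_ae (Eventually.of_forall fun t => (Real.exp_pos _).le)
    hc.aestronglyMeasurable] at this

lemma integral_exp_neg_mul_sub {a : ℝ} (ha : a ≠ 0) (x y : ℝ) :
    ∫ t in x..y, Real.exp (-(a * (t - x))) = (1 - Real.exp (-(a * (y - x)))) / a := by
  have := intervalIntegral.integral_eq_sub_of_hasDerivAt (a := x) (b := y)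
    (f := fun t => -(Real.exp (-(a * (t - x))) / a))
    (f' := fun t => Real.exp (-(a * (t - x)))) (fun t _ => by
      have h := ((((hasDerivAt_id t).sub_const x).const_mul a).neg.exp.div_const a).neg
      convert! h using 1
      simp only [id, Pi.neg_apply]
      field_simp) ((by fun_prop : Continuous _).intervalIntegrable _ _)
  rw [this]
  simp
  ring

/-- The interval `[x, x + L / q₁ x]` contributes `1 - exp(-L)` up to a factor `exp(±δ)`; the rest is
estimated by the uniform bound `C`. -/
lemma truncInt_two_sided {q₁ : ℝ → ℝ} (hq : ∀ a b, IntervalIntegrable q volume a b)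
    (hq₁pos : ∀ x, 0 < q₁ x) {x L δ C : ℝ} (hL : 0 ≤ L) (hδ : Real.exp (-L) ≤ δ)
    (hCb : ∀ x T, x ≤ T → q₁ x * truncInt q x T ≤ C)
    (hloc : ∀ t ∈ Set.Icc x (x + L / q₁ x), |q₁ x / q₁ t - 1| ≤ δ ∧
      |(∫ ξ in x..t, q ξ) - q₁ x * (t - x)| ≤ δ) {T : ℝ} (hT : x + L / q₁ x ≤ T) :
    Real.exp (-δ) * (1 - δ) ≤ q₁ x * truncInt q x T ∧
      q₁ x * truncInt q x T ≤ Real.exp δ + δ * Real.exp δ * (1 + δ) * C := by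
  have px := hq₁pos x
  set y := x + L / q₁ x with hy
  have hxy : x ≤ y := by rw [hy]; have := div_nonneg hL px.le; linarith
  have hyx : q₁ x * (y - x) = L := by rw [hy]; field_simp; ring
  have py := hq₁pos y
  have hc := continuous_exp_neg_primitive hq x
  have hδ0 : 0 < δ := (Real.exp_pos _).trans_le hδ
  have hint := integral_exp_neg_mul_sub px.ne' x y
  rw [hyx] at hint
  have hlow : Real.exp (-δ) * (1 - Real.exp (-L)) ≤ q₁ x * truncInt q x y := by
    have := intervalIntegral.integral_mono_on (μ := volume) hxy
      ((by fun_prop : Continuous fun t =>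
        Real.exp (-δ) * Real.exp (-(q₁ x * (t - x)))).intervalIntegrable x y)
      (hc.intervalIntegrable x y)
      fun t ht => by
        rw [← Real.exp_add, Real.exp_le_exp]
        linarith [(abs_le.1 (hloc t ht).2).2]
    rw [intervalIntegral.integral_const_mul, hint] at this
    calc _ = q₁ x * (Real.exp (-δ) * ((1 - Real.exp (-L)) / q₁ x)) := by field_simp
      _ ≤ _ := by gcongr; exact this
  have hupp : q₁ x * truncInt q x y ≤ Real.exp δ * (1 - Real.exp (-L)) := by
    have := intervalIntegral.integral_mono_on (μ := volume) hxy (hc.intervalIntegrable x y)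
      ((by fun_prop : Continuous fun t =>
        Real.exp δ * Real.exp (-(q₁ x * (t - x)))).intervalIntegrable x y)
      fun t ht => by
        rw [← Real.exp_add, Real.exp_le_exp]
        linarith [(abs_le.1 (hloc t ht).2).1]
    rw [intervalIntegral.integral_const_mul, hint] at this
    calc q₁ x * truncInt q x y ≤ q₁ x * (Real.exp δ * ((1 - Real.exp (-L)) / q₁ x)) := by
          gcongr; exact this
      _ = _ := by field_simp
  have hJ := truncInt_nonneg (q := q) hT
  rw [truncInt_split hq x y T, mul_add]
  constructor
  · have : 0 ≤ q₁ x * (Real.exp (-∫ ξ in x..y, q ξ) * truncInt q y T) := by positivity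
    have h2 : Real.exp (-δ) * (1 - δ) ≤ Real.exp (-δ) * (1 - Real.exp (-L)) := by gcongr
    linarith
  · obtain ⟨h1, h2⟩ := hloc y ⟨hxy, le_rfl⟩
    rw [hyx] at h2
    have h3 : q₁ x / q₁ y ≤ 1 + δ := by linarith [(abs_le.1 h1).2]
    have h4 : Real.exp (-∫ ξ in x..y, q ξ) ≤ δ * Real.exp δ := by
      calc _ ≤ Real.exp (-L + δ) := Real.exp_le_exp.2 (by linarith [(abs_le.1 h2).1])
        _ = Real.exp (-L) * Real.exp δ := Real.exp_add _ _
        _ ≤ _ := by gcongr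
    have h5 : q₁ x * (Real.exp (-∫ ξ in x..y, q ξ) * truncInt q y T)
        ≤ δ * Real.exp δ * (1 + δ) * C := by
      calc _ = Real.exp (-∫ ξ in x..y, q ξ) * (q₁ x / q₁ y) * (q₁ y * truncInt q y T) := by
            field_simp
        _ ≤ _ := by
          gcongr
          exact hCb y T hT
    have h6 : Real.exp δ * (1 - Real.exp (-L)) ≤ Real.exp δ * 1 := by
      gcongr; linarith [Real.exp_pos (-L)]
    linarith

end

/-! ### Passage to the limit -/

lemma exists_of_eventually_cocompact {p : ℝ → Prop} (h : ∀ᶠ x in cocompact ℝ, p x) :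
    ∃ R, ∀ x, R ≤ |x| → p x := by
  rw [← Metric.cobounded_eq_cocompact, ← comap_norm_atTop, eventually_comap,
    eventually_atTop] at h
  obtain ⟨R, hR⟩ := h
  exact ⟨R, fun x hx => hR _ hx x rfl⟩

/-- The asymptotic formula follows from the local comparison alone. -/
lemma tendsto_of_local {q q₁ : ℝ → ℝ} (hq : ∀ a b, IntervalIntegrable q volume a b)
    (hq0 : ∀ x, 0 ≤ q x) (hq₁pos : ∀ x, 0 < q₁ x) (hq₁c : Continuous q₁)
    (hloc : ∀ L δ : ℝ, 0 < L → 0 < δ → ∀ᶠ x in cocompact ℝ,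
      ∀ t ∈ Set.Icc x (x + L / q₁ x), |q₁ x / q₁ t - 1| ≤ δ ∧
        |(∫ ξ in x..t, q ξ) - q₁ x * (t - x)| ≤ δ) :
    Tendsto (fun x : ℝ => q₁ x *
        (∫⁻ t in Set.Ioi x, ENNReal.ofReal (Real.exp (-∫ ξ in x..t, q ξ))).toReal)
      (cocompact ℝ) (𝓝 1) := by
  obtain ⟨R, hR⟩ := exists_of_eventually_cocompact (hloc 3 1 (by norm_num) one_pos)
  -- with `L = 3` and `δ = 1` the contraction factor is at most `2 exp(-2) ≤ 1 / 2`
  obtain ⟨C, hC⟩ := exists_bound_truncInt hq hq0 hq₁pos hq₁c (L := 3) (by norm_num)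
    (fun x hx => by
      have px := hq₁pos x
      have hxy : x ≤ x + 3 / q₁ x := by have : 0 < 3 / q₁ x := by positivity
                                        linarith
      obtain ⟨h1, h2⟩ := hR x hx _ ⟨hxy, le_rfl⟩
      have py := hq₁pos (x + 3 / q₁ x)
      have e : q₁ x * (x + 3 / q₁ x - x) = 3 := by field_simp; ring
      rw [e] at h2
      have h3 : q₁ x / q₁ (x + 3 / q₁ x) ≤ 2 := by linarith [(abs_le.1 h1).2]
      have h4 : Real.exp (-∫ ξ in x..(x + 3 / q₁ x), q ξ) ≤ Real.exp (-2) :=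
        Real.exp_le_exp.2 (by linarith [(abs_le.1 h2).1])
      have h5 : Real.exp (-2) ≤ 1 / 4 := by
        have h6 : (2 : ℝ) ≤ Real.exp 1 := by linarith [Real.add_one_le_exp (1 : ℝ)]
        rw [Real.exp_neg, one_div]
        apply inv_anti₀ (by norm_num)
        have : Real.exp 2 = Real.exp 1 * Real.exp 1 := by rw [← Real.exp_add]; norm_num
        nlinarith
      calc Real.exp (-∫ ξ in x..(x + 3 / q₁ x), q ξ) * (q₁ x / q₁ (x + 3 / q₁ x))
          ≤ 1 / 4 * 2 := mul_le_mul (h4.trans h5) h3 (by positivity) (by norm_num)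
        _ = 1 / 2 := by norm_num)
  have hlim : ∀ x, Tendsto (fun T => q₁ x * truncInt q x T) atTop (𝓝 (q₁ x *
      (∫⁻ t in Set.Ioi x, ENNReal.ofReal (Real.exp (-∫ ξ in x..t, q ξ))).toReal)) := by
    intro x
    refine (tendsto_truncInt hq (B := C / q₁ x) fun T hT => ?_).const_mul _
    rw [le_div_iff₀ (hq₁pos x), mul_comm]
    exact hC x T hT
  have hlo : Tendsto (fun δ : ℝ => Real.exp (-δ) * (1 - δ)) (𝓝[>] 0) (𝓝 1) := by
    have : Continuous fun δ : ℝ => Real.exp (-δ) * (1 - δ) := by fun_prop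
    simpa using (this.tendsto 0).mono_left nhdsWithin_le_nhds
  have hhi : Tendsto (fun δ : ℝ => Real.exp δ + δ * Real.exp δ * (1 + δ) * C) (𝓝[>] 0) (𝓝 1) := by
    have : Continuous fun δ : ℝ => Real.exp δ + δ * Real.exp δ * (1 + δ) * C := by fun_prop
    simpa using (this.tendsto 0).mono_left nhdsWithin_le_nhds
  rw [Metric.tendsto_nhds]
  intro ε hε
  obtain ⟨δ, ⟨hδ1, hδ2⟩, hδ0⟩ := ((hlo.eventually (lt_mem_nhds (show 1 - ε < 1 by linarith))).and
    (hhi.eventually (gt_mem_nhds (show 1 < 1 + ε by linarith)))).and self_mem_nhdsWithin |>.exists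
  replace hδ0 : 0 < δ := hδ0
  obtain ⟨L, hL0, hL⟩ : ∃ L : ℝ, 0 < L ∧ Real.exp (-L) ≤ δ :=
    ((eventually_gt_atTop 0).and ((Real.tendsto_exp_neg_atTop_nhds_zero).eventually
      (ge_mem_nhds hδ0))).exists
  filter_upwards [hloc L δ hL0 hδ0] with x hx
  have hev : ∀ᶠ T in atTop, Real.exp (-δ) * (1 - δ) ≤ q₁ x * truncInt q x T ∧
      q₁ x * truncInt q x T ≤ Real.exp δ + δ * Real.exp δ * (1 + δ) * C := by
    filter_upwards [eventually_ge_atTop (x + L / q₁ x)] with T hT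
    exact truncInt_two_sided hq hq₁pos hL0.le hL hC hx hT
  have h1 := ge_of_tendsto (hlim x) (hev.mono fun _ h => h.1)
  have h2 := le_of_tendsto (hlim x) (hev.mono fun _ h => h.2)
  rw [Real.dist_eq, abs_lt]
  constructor <;> linarith

/-- Hypotheses (a)–(d) and `ϰ̃ → 0` give the local comparison on `[x, x + L / q₁ x]` for every
fixed `L`, with arbitrarily small error. -/
lemma eventually_local_estimate {q q₁ q₁' q₂ s : ℝ → ℝ}
    (hsplit : ∀ x, q x = q₁ x + q₂ x) (hq₁pos : ∀ x, 0 < q₁ x)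
    (hq₁'loc : LocallyIntegrable q₁' volume)
    (hq₁AC : ∀ a b : ℝ, q₁ b - q₁ a = ∫ t in a..b, q₁' t)
    (hq₁c : Continuous q₁) (hq₂loc : LocallyIntegrable q₂ volume) (hspos : ∀ x, 0 < s x)
    (hsinf : Tendsto s (cocompact ℝ) atTop)
    (hb : ∃ R : ℝ, ∀ᵐ x : ℝ ∂volume, R ≤ |x| → |q₁' x| / (q₁ x) ^ 2 ≤ 1 / s x)
    (hc : Tendsto (fun x : ℝ => s x / (x * q₁ x)) (cocompact ℝ) (𝓝 0))
    (hd : ∃ ν : ℝ, 1 ≤ ν ∧ ∃ R : ℝ, ∀ x : ℝ, R ≤ |x| →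
      ∀ t ∈ Set.Icc (x - s x / q₁ x) (x + s x / q₁ x),
        1 / ν ≤ s t / s x ∧ s t / s x ≤ ν)
    (he : Tendsto (fun x : ℝ =>
      sSup ((fun t => |q₁ t * ∫ ξ in x..t, q₂ ξ / q₁ ξ|) ''
        Set.Icc (x - s x / q₁ x) (x + s x / q₁ x))) (cocompact ℝ) (𝓝 0))
    (L δ : ℝ) (hL : 0 < L) (hδ : 0 < δ) :
    ∀ᶠ x in cocompact ℝ, ∀ t ∈ Set.Icc x (x + L / q₁ x), |q₁ x / q₁ t - 1| ≤ δ ∧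
        |(∫ ξ in x..t, q ξ) - q₁ x * (t - x)| ≤ δ := by
  obtain ⟨Rb, hb⟩ := hb
  obtain ⟨ν, hν, Rd, hd⟩ := hd
  have hν0 : 0 < ν := by linarith
  have habs : ∀ R, ∀ᶠ x in cocompact ℝ, R ≤ |x| := fun R =>
    (tendsto_norm_cocompact_atTop (E := ℝ)).eventually_ge_atTop R
  -- the three smallness requirements on `c * L` with `c = ν / s x`
  have hm : 0 < min (1 / 2) (min δ (δ / (4 * L))) := by positivity
  have hcL : ∀ᶠ x in cocompact ℝ, ν / s x * L ≤ min (1 / 2) (min δ (δ / (4 * L))) := by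
    have : Tendsto (fun x => ν / s x * L) (cocompact ℝ) (𝓝 0) := by
      simpa using (hsinf.const_div_atTop ν).mul_const L
    exact this.eventually (ge_mem_nhds hm)
  have hhalf := hc.abs
  rw [abs_zero] at hhalf
  have hgloc : LocallyIntegrable (fun ξ => q₂ ξ / q₁ ξ) volume := by
    have := hq₂loc.mul_continuous (hq₁c.inv₀ fun x => (hq₁pos x).ne')
    simpa [div_eq_mul_inv] using this
  filter_upwards [hcL, habs Rd, habs (2 * Rb), habs 1, hsinf.eventually_ge_atTop L,
    hhalf.eventually (ge_mem_nhds (show (0 : ℝ) < 1 / 2 by norm_num)),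
    he.eventually (ge_mem_nhds (show 0 < δ / 4 by positivity))] with x h1 h2 h3 h4 h5 h6 h7
  have px := hq₁pos x
  have sx := hspos x
  -- by (c), every point of `Δ(x)` has absolute value at least `|x| / 2`
  have hrad : s x / q₁ x ≤ |x| / 2 := by
    rw [abs_div, abs_mul, abs_of_pos px, abs_of_pos sx, div_le_iff₀ (by positivity)] at h6
    rw [div_le_iff₀ px]
    linarith
  have hLs : L / q₁ x ≤ s x / q₁ x := by gcongr
  have hL0 : 0 < L / q₁ x := by positivity
  have hsub : ∀ t ∈ Set.Icc x (x + L / q₁ x),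
      t ∈ Set.Icc (x - s x / q₁ x) (x + s x / q₁ x) := fun t ht =>
    ⟨by linarith [ht.1], by linarith [ht.2]⟩
  have hcont : Continuous fun t => |q₁ t * ∫ ξ in x..t, q₂ ξ / q₁ ξ| :=
    (hq₁c.mul (intervalIntegral.continuous_primitive
      (fun a b => locallyIntegrable_intervalIntegrable hgloc a b) x)).abs
  have key := local_estimate hsplit hq₁pos hq₁'loc hq₁AC hq₁c hq₂loc (x := x)
    (y := x + L / q₁ x) (c := ν / s x) (κ := δ / 4) (L := L) (by linarith)
    (by rw [add_sub_cancel_left, mul_div_cancel₀ _ px.ne']) (by positivity)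
    (h1.trans (min_le_left _ _)) (by positivity) (by
      filter_upwards [hb] with t hbt ht
      have pt := hq₁pos t
      have st := hspos t
      have ht1 : |t - x| ≤ |x| / 2 := by
        rw [abs_of_nonneg (by linarith [ht.1])]; linarith [ht.2]
      have ht2 : Rb ≤ |t| := by
        have := abs_sub_abs_le_abs_sub x t
        rw [abs_sub_comm] at this
        linarith
      have hs := (hd x h2 t (hsub t ht)).1
      rw [div_le_div_iff₀ hν0 sx] at hs
      have h8 : 1 / s t ≤ ν / s x := by
        rw [div_le_div_iff₀ st sx]; linarith
      have h9 := (hbt ht2).trans h8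
      rwa [div_le_iff₀ (by positivity)] at h9)
    (fun t ht => le_trans (le_csSup (isCompact_Icc.bddAbove_image hcont.continuousOn)
      ⟨t, hsub t ht, rfl⟩) h7)
  intro t ht
  obtain ⟨k1, k2⟩ := key t ht
  have hδ1 : ν / s x * L ≤ δ := h1.trans ((min_le_right _ _).trans (min_le_left _ _))
  have hδ2 : ν / s x * L ≤ δ / (4 * L) := h1.trans ((min_le_right _ _).trans (min_le_right _ _))
  rw [le_div_iff₀ (by positivity)] at hδ2
  exact ⟨k1.trans hδ1, k2.trans (by linarith)⟩

theorem stmt10 (q q₁ q₁' q₂ s : ℝ → ℝ)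
    (hq : ∀ x, 0 ≤ q x) (hqloc : LocallyIntegrable q volume)
    (hsplit : ∀ x, q x = q₁ x + q₂ x)
    (hq₁pos : ∀ x, 0 < q₁ x)
    -- `q₁` is locally absolutely continuous with a.e. derivative `q₁'`
    (hq₁'loc : LocallyIntegrable q₁' volume)
    (hq₁AC : ∀ a b : ℝ, q₁ b - q₁ a = ∫ t in a..b, q₁' t)
    (hq₂loc : LocallyIntegrable q₂ volume)
    (hscont : Continuous s) (hspos : ∀ x, 0 < s x)
    -- (a)
    (hsinf : Tendsto s (cocompact ℝ) atTop)
    -- (b)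
    (hb : ∃ R : ℝ, ∀ᵐ x : ℝ ∂volume, R ≤ |x| → |q₁' x| / (q₁ x) ^ 2 ≤ 1 / s x)
    -- (c)
    (hc : Tendsto (fun x : ℝ => s x / (x * q₁ x)) (cocompact ℝ) (𝓝 0))
    -- (d)
    (hd : ∃ ν : ℝ, 1 ≤ ν ∧ ∃ R : ℝ, ∀ x : ℝ, R ≤ |x| →
      ∀ t ∈ Set.Icc (x - s x / q₁ x) (x + s x / q₁ x),
        1 / ν ≤ s t / s x ∧ s t / s x ≤ ν)
    -- (e): `ϰ̃(x) → 0` as `|x| → ∞`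
    (he : Tendsto (fun x : ℝ =>
      sSup ((fun t => |q₁ t * ∫ ξ in x..t, q₂ ξ / q₁ ξ|) ''
        Set.Icc (x - s x / q₁ x) (x + s x / q₁ x))) (cocompact ℝ) (𝓝 0)) :
    Tendsto (fun x : ℝ => q₁ x *
        (∫⁻ t in Set.Ioi x, ENNReal.ofReal (Real.exp (-∫ ξ in x..t, q ξ))).toReal)
      (cocompact ℝ) (𝓝 1) := by
  have hq₁c : Continuous q₁ := by
    have h := (intervalIntegral.continuous_primitive
      (fun a b => locallyIntegrable_intervalIntegrable hq₁'loc a b) 0).add_const (q₁ 0)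
    convert h using 2 with x
    rw [← hq₁AC 0 x]; ring
  exact tendsto_of_local (fun a b => locallyIntegrable_intervalIntegrable hqloc a b) hq hq₁pos hq₁c
    (eventually_local_estimate hsplit hq₁pos hq₁'loc hq₁AC hq₁c hq₂loc hspos hsinf hb hc hd he)
end

section
/- Assume there exists a ∈ (0,∞) with q₀(a) > 0, and fix p ∈ [1,∞). Then the bounded linear operator L^{−1} : L_p(ℝ) → L_p(ℝ) defined by (L^{−1}f)(x) = ∫_x^∞ exp(−∫_x^t q(ξ) dξ) f(t) dt is a compact operator if and only if ∫_{x−b}^{x+b} q(t) dt → ∞ as |x| → ∞ for every b ∈ (0,∞) (equivalently, d(x) → 0 as |x| → ∞). -/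
/-!
Write `E(x, t) = exp (-∫_x^t q)` for the kernel of `T`. Since every window of length `2 a` carries
mass at least `q₀(a) > 0`, `∫_x^t q ≥ δ (t - x) - C` for some `δ > 0`, so `E` decays exponentially in
`t - x`. An operator whose kernel is bounded by `k (t - x)` has norm at most `∫ k` on every `L^p`
(`opNorm_le_of_weighted_translates`).

If the mass of `q` on windows tends to infinity, then `sup_{|x| ≥ N} E(x, x + s) → 0` as `N → ∞` for
each `s > 0`, and by dominated convergence its integral over `s > 0` tends to `0`
(`tendsto_lintegral_tailKernel`). So the part of `T f` outside `[-N, N)` is negligible. Inside, `E`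
is a product of a function of `x` and a function of `t`, so replacing the lower endpoint `x` of the
integral by the next point of a grid of mesh `h` gives a finite-rank operator
(`exists_compact_cells`), at the cost of an error of norm at most `h`. Hence `T` is a norm limit of
finite-rank operators.

Conversely, if the mass on `[x n - b, x n + b]` stays at most `A` along some `|x n| → ∞`, the image
under `T` of the indicator of that window is at least `b * exp (-A)` on `[x n - b, x n]`
(`ae_lower_bound_image_indicator`). For compact `T` a subsequence of the images converges in `L^p`
to some `g`, whose norm on `[x n - b, x n]` tends to `0` because `p < ∞`, a contradiction.
-/

open MeasureTheory Filter Topology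
open scoped ENNReal

/-! ### An `L^p` bound by weighted translates -/

/-- Minkowski's integral inequality for an average of translates: Jensen's inequality for the
measure with density `k` on `(0, ∞)`, then Tonelli and translation invariance. -/
lemma lintegral_weighted_translates_rpow_le (k F : ℝ → ℝ≥0∞) (hk : Measurable k)
    (hF : Measurable F) {r : ℝ} (hr : 1 ≤ r) :
    ∫⁻ x, (∫⁻ s in Set.Ioi (0 : ℝ), k s * F (x + s)) ^ r ≤
      (∫⁻ s in Set.Ioi (0 : ℝ), k s) ^ r * ∫⁻ x, F x ^ r := by
  have hr0 : 0 < r := by linarith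
  set μ := (volume.restrict (Set.Ioi (0 : ℝ))).withDensity k with hμ
  have hμu : μ Set.univ = ∫⁻ s in Set.Ioi (0 : ℝ), k s := by
    rw [hμ, withDensity_apply _ MeasurableSet.univ, Measure.restrict_univ]
  have hin : ∀ x, ∫⁻ s in Set.Ioi (0 : ℝ), k s * F (x + s) = ∫⁻ s, F (x + s) ∂μ := by
    intro x
    rw [hμ, lintegral_withDensity_eq_lintegral_mul _ hk (by fun_prop)]
    rfl
  have hJ : ∀ x, (∫⁻ s, F (x + s) ∂μ) ^ r ≤ (∫⁻ s, F (x + s) ^ r ∂μ) * μ Set.univ ^ (r - 1) := by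
    intro x
    have h := eLpNorm'_le_eLpNorm'_mul_rpow_measure_univ (μ := μ) (f := fun s => F (x + s))
      one_pos hr (by
        have : Measurable (fun s => F (x + s)) := by fun_prop
        exact this.aestronglyMeasurable)
    simp only [eLpNorm', enorm_eq_self, ENNReal.rpow_one, div_one] at h
    have h2 := ENNReal.rpow_le_rpow h hr0.le
    refine h2.trans (le_of_eq ?_)
    rw [ENNReal.mul_rpow_of_nonneg _ _ hr0.le, ← ENNReal.rpow_mul, ← ENNReal.rpow_mul]
    congr 1
    · rw [one_div, inv_mul_cancel₀ hr0.ne', ENNReal.rpow_one]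
    · congr 1; field_simp
  simp_rw [hin]
  calc ∫⁻ x, (∫⁻ s, F (x + s) ∂μ) ^ r
      ≤ ∫⁻ x, (∫⁻ s, F (x + s) ^ r ∂μ) * μ Set.univ ^ (r - 1) := lintegral_mono hJ
    _ = (∫⁻ x, (∫⁻ s, F (x + s) ^ r ∂μ)) * μ Set.univ ^ (r - 1) := by
        rw [lintegral_mul_const]
        exact Measurable.lintegral_prod_right' (f := fun z : ℝ × ℝ => F (z.1 + z.2) ^ r)
          (by fun_prop)
    _ = (∫⁻ s, (∫⁻ x, F (x + s) ^ r) ∂μ) * μ Set.univ ^ (r - 1) := by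
        rw [lintegral_lintegral_swap]
        have : Measurable (fun z : ℝ × ℝ => F (z.1 + z.2) ^ r) := by fun_prop
        exact this.aemeasurable
    _ = (∫⁻ x, F x ^ r) * (μ Set.univ * μ Set.univ ^ (r - 1)) := by
        have : ∀ s, ∫⁻ x, F (x + s) ^ r = ∫⁻ x, F x ^ r := fun s =>
          lintegral_add_right_eq_self (fun x => F x ^ r) s
        simp_rw [this, lintegral_const, mul_assoc]
    _ = _ := by
        rw [hμu, mul_comm]
        congr 1
        conv_lhs => rw [← ENNReal.rpow_one (∫⁻ s in Set.Ioi (0 : ℝ), k s), ← ENNReal.rpow_mul, one_mul]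
        rw [← ENNReal.rpow_add_of_nonneg _ _ zero_le_one (by linarith)]
        congr 1; ring

/-- An operator dominated pointwise by an average of translates with weight `k` has norm at most
`∫ k`. -/
lemma opNorm_le_of_weighted_translates {p : ℝ≥0∞} [hp : Fact (1 ≤ p)] (hptop : p ≠ ∞)
    (R : Lp ℝ p (volume : Measure ℝ) →L[ℝ] Lp ℝ p (volume : Measure ℝ))
    (k : ℝ → ℝ≥0∞) (hk : Measurable k)
    (hR : ∀ f : Lp ℝ p (volume : Measure ℝ), ∀ᵐ x : ℝ, ‖(R f : ℝ → ℝ) x‖ₑ ≤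
      ∫⁻ s in Set.Ioi (0 : ℝ), k s * ‖(f : ℝ → ℝ) (x + s)‖ₑ)
    {C : ℝ} (hC : 0 ≤ C) (hkC : ∫⁻ s in Set.Ioi (0 : ℝ), k s ≤ ENNReal.ofReal C) : ‖R‖ ≤ C := by
  refine R.opNorm_le_bound hC fun f => ?_
  have hp0 : p ≠ 0 := (zero_lt_one.trans_le hp.out).ne'
  have hr : 1 ≤ p.toReal := by
    rw [← ENNReal.toReal_one]; exact ENNReal.toReal_mono hptop hp.out
  have hr0 : 0 < p.toReal := by linarith
  have key : eLpNorm (R f) p volume ≤ ENNReal.ofReal C * eLpNorm f p volume := by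
    rw [eLpNorm_eq_lintegral_rpow_enorm_toReal hp0 hptop,
      eLpNorm_eq_lintegral_rpow_enorm_toReal hp0 hptop]
    have h1 : ∫⁻ x, ‖(R f : ℝ → ℝ) x‖ₑ ^ p.toReal ≤
        (ENNReal.ofReal C) ^ p.toReal * ∫⁻ x, ‖(f : ℝ → ℝ) x‖ₑ ^ p.toReal := by
      calc _ ≤ ∫⁻ x, (∫⁻ s in Set.Ioi (0 : ℝ), k s * ‖(f : ℝ → ℝ) (x + s)‖ₑ) ^ p.toReal := by
            refine lintegral_mono_ae ?_
            filter_upwards [hR f] with x hx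
            exact ENNReal.rpow_le_rpow hx hr0.le
        _ ≤ _ := lintegral_weighted_translates_rpow_le k (fun x => ‖(f : ℝ → ℝ) x‖ₑ) hk
            (Lp.stronglyMeasurable f).measurable.enorm hr
        _ ≤ _ := by gcongr
    refine (ENNReal.rpow_le_rpow h1 (by positivity)).trans (le_of_eq ?_)
    rw [ENNReal.mul_rpow_of_nonneg _ _ (by positivity), ← ENNReal.rpow_mul,
      mul_one_div_cancel hr0.ne', ENNReal.rpow_one]
  rw [Lp.norm_def, Lp.norm_def]
  have := ENNReal.toReal_mono (ENNReal.mul_ne_top ENNReal.ofReal_ne_top (Lp.eLpNorm_ne_top f)) key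
  rwa [ENNReal.toReal_mul, ENNReal.toReal_ofReal hC] at this

/-! ### The potential and its exponential kernel -/

section Potential
variable {q : ℝ → ℝ}

lemma intervalIntegrable_of_loc (hqloc : LocallyIntegrable q volume) {x y : ℝ} :
    IntervalIntegrable q volume x y :=
  (hqloc.integrableOn_isCompact isCompact_uIcc).intervalIntegrable

lemma intervalIntegral_mono_of_subset (hq : ∀ x, 0 ≤ q x) (hqloc : LocallyIntegrable q volume)
    {x y x' y' : ℝ} (h1 : x' ≤ x) (h2 : x ≤ y) (h3 : y ≤ y') :
    ∫ t in x..y, q t ≤ ∫ t in x'..y', q t :=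
  intervalIntegral.integral_mono_interval h1 h2 h3 (ae_of_all _ hq)
    ((intervalIntegrable_of_loc hqloc))

/-- Each of the disjoint windows of length `2 a` inside `[x, t]` carries mass at least `q₀(a)`, so
`∫_x^t q` grows at least linearly in `t - x`. -/
lemma exists_linear_lower_bound (hq : ∀ x, 0 ≤ q x) (hqloc : LocallyIntegrable q volume)
    {a : ℝ} (ha : 0 < a) (hqa : 0 < ⨅ z : ℝ, ∫ t in z - a..z + a, q t) :
    ∃ δ C : ℝ, 0 < δ ∧ ∀ x t, x ≤ t → δ * (t - x) - C ≤ ∫ ξ in x..t, q ξ := by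
  set c := ⨅ z : ℝ, ∫ t in z - a..z + a, q t with hc
  have hcz : ∀ z, c ≤ ∫ t in z - a..z + a, q t := fun z =>
    ciInf_le ⟨0, by
      rintro _ ⟨z, rfl⟩
      exact intervalIntegral.integral_nonneg (by linarith) fun _ _ => hq _⟩ z
  have hn : ∀ (n : ℕ) x, c * n ≤ ∫ ξ in x..(x + 2 * a * n), q ξ := by
    intro n x
    induction n with
    | zero => simp
    | succ n ih =>
      have h := hcz (x + 2 * a * n + a)
      rw [← intervalIntegral.integral_add_adjacent_intervals (b := x + 2 * a * n)
        (intervalIntegrable_of_loc hqloc) (intervalIntegrable_of_loc hqloc)]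
      have e1 : x + 2 * a * n + a - a = x + 2 * a * n := by ring
      have e2 : x + 2 * a * n + a + a = x + 2 * a * (n + 1 : ℕ) := by push_cast; ring
      rw [e1, e2] at h
      push_cast at h ⊢
      linarith
  refine ⟨c / (2 * a), c, by positivity, fun x t hxt => ?_⟩
  have hy : 0 ≤ (t - x) / (2 * a) := div_nonneg (by linarith) (by linarith)
  set n := ⌊(t - x) / (2 * a)⌋₊
  have h1 : (n : ℝ) ≤ (t - x) / (2 * a) := Nat.floor_le hy
  have h2 : (t - x) / (2 * a) < n + 1 := Nat.lt_floor_add_one _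
  have h3 : x + 2 * a * n ≤ t := by
    rw [le_div_iff₀ (by linarith)] at h1; linarith
  have h4 := intervalIntegral_mono_of_subset hq hqloc le_rfl
    (show x ≤ x + 2 * a * n by have : 0 ≤ 2 * a * n := by positivity
                               linarith) h3
  have h5 : c / (2 * a) * (t - x) = c * ((t - x) / (2 * a)) := by ring
  have h6 := hn n x
  rw [h5]
  nlinarith

lemma continuous_primitive_of_locallyIntegrable (hqloc : LocallyIntegrable q volume) :
    Continuous fun x => ∫ ξ in (0 : ℝ)..x, q ξ :=
  intervalIntegral.continuous_primitive (fun _ _ => (intervalIntegrable_of_loc hqloc)) 0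

/-- The kernel is a product of a function of `x` and a function of `t`. -/
lemma kernel_eq (hqloc : LocallyIntegrable q volume) (x t : ℝ) :
    Real.exp (-∫ ξ in x..t, q ξ) =
      Real.exp (∫ ξ in (0 : ℝ)..x, q ξ) * Real.exp (-∫ ξ in (0 : ℝ)..t, q ξ) := by
  rw [← Real.exp_add, ← intervalIntegral.integral_add_adjacent_intervals (a := 0) (b := x) (c := t)
    (intervalIntegrable_of_loc hqloc) (intervalIntegrable_of_loc hqloc)]
  congr 1; ring

/-- On a half-line `(u, ∞)` the weight decays exponentially, hence lies in every `L^p`. -/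
lemma memLp_weight (hqloc : LocallyIntegrable q volume) {δ C : ℝ} (hδ : 0 < δ)
    (hQ : ∀ x t, x ≤ t → δ * (t - x) - C ≤ ∫ ξ in x..t, q ξ) (u : ℝ) (p : ℝ≥0∞) :
    MemLp ((Set.Ioi u).indicator fun t => Real.exp (-∫ ξ in (0 : ℝ)..t, q ξ)) p volume := by
  have hc := continuous_primitive_of_locallyIntegrable hqloc
  have hmeas : AEStronglyMeasurable
      ((Set.Ioi u).indicator fun t => Real.exp (-∫ ξ in (0 : ℝ)..t, q ξ)) volume :=
    ((by fun_prop : Continuous fun t => Real.exp (-∫ ξ in (0 : ℝ)..t, q ξ)).aestronglyMeasurable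
      ).indicator measurableSet_Ioi
  obtain ⟨D, hD⟩ : ∃ D : ℝ, ∀ t, u < t →
      Real.exp (-∫ ξ in (0 : ℝ)..t, q ξ) ≤ Real.exp D * Real.exp (-δ * (t - u)) := by
    refine ⟨C - ∫ ξ in (0 : ℝ)..u, q ξ, fun t ht => ?_⟩
    rw [← Real.exp_add]
    apply Real.exp_le_exp.2
    have := hQ u t ht.le
    rw [← intervalIntegral.integral_add_adjacent_intervals (a := 0) (b := u) (c := t)
      (intervalIntegrable_of_loc hqloc) (intervalIntegrable_of_loc hqloc)]
    linarith
  rcases eq_or_ne p ∞ with rfl | hp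
  · refine memLp_top_of_bound hmeas (Real.exp D) (ae_of_all _ fun t => ?_)
    by_cases ht : t ∈ Set.Ioi u
    · rw [Set.indicator_of_mem ht, Real.norm_of_nonneg (Real.exp_nonneg _)]
      refine (hD t ht).trans (mul_le_of_le_one_right (Real.exp_nonneg _) ?_)
      rw [Real.exp_le_one_iff]
      nlinarith [Set.mem_Ioi.1 ht]
    · rw [Set.indicator_of_notMem ht, norm_zero]; positivity
  rcases eq_or_ne p 0 with rfl | hp0
  · exact memLp_zero_iff_aestronglyMeasurable.2 hmeas
  have hr : 0 < p.toReal := ENNReal.toReal_pos hp0 hp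
  rw [← integrable_norm_rpow_iff hmeas hp0 hp]
  have hint : IntegrableOn (fun t => Real.exp (p.toReal * (D + δ * u)) *
      Real.exp (-(p.toReal * δ) * t)) (Set.Ioi u) :=
    (exp_neg_integrableOn_Ioi u (by positivity)).const_mul _
  rw [← integrable_indicator_iff measurableSet_Ioi] at hint
  refine hint.mono' (hmeas.norm.aemeasurable.pow_const _).aestronglyMeasurable
    (ae_of_all _ fun t => ?_)
  by_cases ht : t ∈ Set.Ioi u
  · rw [Set.indicator_of_mem ht, Set.indicator_of_mem ht, Real.norm_of_nonneg (by positivity),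
      Real.norm_of_nonneg (Real.exp_nonneg _), ← Real.exp_add]
    refine (Real.rpow_le_rpow (Real.exp_nonneg _) (hD t ht) hr.le).trans (le_of_eq ?_)
    rw [← Real.exp_add, ← Real.exp_mul]
    congr 1; ring
  · rw [Set.indicator_of_notMem ht, Set.indicator_of_notMem ht, norm_zero,
      Real.zero_rpow hr.ne', norm_zero]

end Potential

/-! ### Kernel tails and finite-rank approximants -/

section Approximation
variable {q : ℝ → ℝ}

/-- The supremum of the kernel `exp (-∫_x^{x+s} q)` over base points with `N ≤ |x|`,
as a function of the displacement `s`. -/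
noncomputable def tailKernel (q : ℝ → ℝ) (N s : ℝ) : ℝ≥0∞ :=
  ⨆ (x : ℝ) (_ : N ≤ |x|), ENNReal.ofReal (Real.exp (-∫ ξ in x..x + s, q ξ))

lemma measurable_tailKernel (hq : ∀ x, 0 ≤ q x) (hqloc : LocallyIntegrable q volume) (N : ℝ) :
    Measurable (tailKernel q N) := by
  refine Antitone.measurable fun s t hst => ?_
  refine iSup₂_mono fun x _ => ENNReal.ofReal_le_ofReal (Real.exp_le_exp.2 (neg_le_neg ?_))
  rw [← intervalIntegral.integral_add_adjacent_intervals (a := x) (b := x + s) (c := x + t)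
    (intervalIntegrable_of_loc hqloc) (intervalIntegrable_of_loc hqloc)]
  have := intervalIntegral.integral_nonneg (μ := volume) (f := q)
    (show x + s ≤ x + t by linarith) (fun _ _ => hq _)
  linarith

/-- Dominated convergence: for fixed `s > 0` the interval `[x, x + s]` carries arbitrarily large
mass of `q` as `|x| → ∞`, while exponential decay of the kernel supplies the majorant. -/
lemma tendsto_lintegral_tailKernel (hq : ∀ x, 0 ≤ q x) (hqloc : LocallyIntegrable q volume)
    {δ C : ℝ} (hδ : 0 < δ) (hQ : ∀ x t, x ≤ t → δ * (t - x) - C ≤ ∫ ξ in x..t, q ξ)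
    (hlim : ∀ b : ℝ, 0 < b →
        Tendsto (fun x : ℝ => ∫ t in x - b..x + b, q t) (cocompact ℝ) atTop) :
    Tendsto (fun N : ℕ => ∫⁻ s in Set.Ioi (0 : ℝ), tailKernel q N s) atTop (𝓝 0) := by
  have h0 : (0 : ℝ≥0∞) = ∫⁻ s in Set.Ioi (0 : ℝ), 0 := by simp
  rw [h0]
  refine tendsto_lintegral_of_dominated_convergence
    (fun s => ENNReal.ofReal (Real.exp C * Real.exp (-δ * s)))
    (fun N => measurable_tailKernel hq hqloc N) (fun N => ?_) ?_ ?_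
  · refine (ae_restrict_iff' measurableSet_Ioi).2 (ae_of_all _ fun s hs => ?_)
    refine iSup₂_le fun x _ => ENNReal.ofReal_le_ofReal ?_
    rw [← Real.exp_add]
    apply Real.exp_le_exp.2
    have := hQ x (x + s) (by linarith [Set.mem_Ioi.1 hs])
    linarith
  · exact (((exp_neg_integrableOn_Ioi 0 hδ).const_mul (Real.exp C)).lintegral_lt_top).ne
  · refine (ae_restrict_iff' measurableSet_Ioi).2 (ae_of_all _ fun s hs => ?_)
    have hs : 0 < s := hs
    rw [ENNReal.tendsto_nhds_zero]
    intro ε hε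
    obtain ⟨A, hA⟩ : ∃ A : ℝ, ENNReal.ofReal (Real.exp (-A)) ≤ ε := by
      have : Tendsto (fun A : ℝ => ENNReal.ofReal (Real.exp (-A))) atTop (𝓝 0) := by
        have := ENNReal.tendsto_ofReal Real.tendsto_exp_neg_atTop_nhds_zero
        rwa [ENNReal.ofReal_zero] at this
      exact ((ENNReal.tendsto_nhds_zero.1 this) ε hε).exists
    have h1 := (hlim (s / 2) (by positivity)).eventually (eventually_ge_atTop A)
    rw [← Metric.cobounded_eq_cocompact,
      (Metric.hasBasis_cobounded_compl_closedBall (0 : ℝ)).eventually_iff] at h1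
    obtain ⟨M, -, hM⟩ := h1
    filter_upwards [eventually_gt_atTop ⌈M + s⌉₊] with N hN
    refine iSup₂_le fun x hx => le_trans (ENNReal.ofReal_le_ofReal ?_) hA
    have hN' : M + s < N := Nat.lt_of_ceil_lt hN
    have h2 := hM (x := x + s / 2) (by
      rw [Set.mem_compl_iff, Metric.mem_closedBall, dist_zero_right, Real.norm_eq_abs, not_le]
      have h3 := abs_sub_abs_le_abs_sub x (-(s / 2))
      rw [abs_neg, abs_of_pos (half_pos hs), sub_neg_eq_add] at h3
      linarith)
    rw [show x + s / 2 - s / 2 = x by ring, show x + s / 2 + s / 2 = x + s by ring] at h2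
    exact Real.exp_le_exp.2 (neg_le_neg h2)

variable {p : ℝ≥0∞} [hp : Fact (1 ≤ p)]

/-- Hölder's inequality against the weight, which lies in every Lebesgue space on a half-line. -/
lemma integrableOn_kernel_mul (hqloc : LocallyIntegrable q volume) {δ C : ℝ} (hδ : 0 < δ)
    (hQ : ∀ x t, x ≤ t → δ * (t - x) - C ≤ ∫ ξ in x..t, q ξ)
    (f : Lp ℝ p (volume : Measure ℝ)) (x u : ℝ) :
    IntegrableOn (fun t => Real.exp (-∫ ξ in x..t, q ξ) * (f : ℝ → ℝ) t) (Set.Ioi u) := by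
  have := ENNReal.HolderConjugate.inv_one_sub_inv' hp.out
  have h := (Lp.memLp f).integrable_mul (memLp_weight hqloc hδ hQ u (1 - p⁻¹)⁻¹)
  rw [← integrable_indicator_iff measurableSet_Ioi]
  refine (h.const_mul (Real.exp (∫ ξ in (0 : ℝ)..x, q ξ))).congr (ae_of_all _ fun t => ?_)
  by_cases ht : t ∈ Set.Ioi u
  · simp only [Pi.mul_apply, Set.indicator_of_mem ht, kernel_eq hqloc x t]
    ring
  · simp only [Pi.mul_apply, Set.indicator_of_notMem ht, mul_zero]

/-- On a cell `[y, u)`, starting the integral at `u` instead of `x` separates the variables, so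
the resulting operator has rank at most one. -/
lemma exists_compact_cell (hqloc : LocallyIntegrable q volume) {δ C : ℝ} (hδ : 0 < δ)
    (hQ : ∀ x t, x ≤ t → δ * (t - x) - C ≤ ∫ ξ in x..t, q ξ) (y u : ℝ) :
    ∃ S : Lp ℝ p (volume : Measure ℝ) →L[ℝ] Lp ℝ p (volume : Measure ℝ),
      IsCompactOperator S ∧ ∀ f : Lp ℝ p (volume : Measure ℝ), ∀ᵐ x : ℝ,
        (S f : ℝ → ℝ) x = (Set.Ico y u).indicator
          (fun x => ∫ t in Set.Ioi u, Real.exp (-∫ ξ in x..t, q ξ) * (f : ℝ → ℝ) t) x := by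
  have hconj := ENNReal.HolderConjugate.inv_one_sub_inv' hp.out
  have : Fact (1 ≤ (1 - p⁻¹)⁻¹) := ⟨by
    rw [ENNReal.one_le_inv]; exact tsub_le_self⟩
  have hc := continuous_primitive_of_locallyIntegrable hqloc
  have hcE : Continuous fun x => Real.exp (∫ ξ in (0 : ℝ)..x, q ξ) := by fun_prop
  have hv : MemLp ((Set.Ico y u).indicator fun x => Real.exp (∫ ξ in (0 : ℝ)..x, q ξ)) p
      volume := by
    obtain ⟨B, hB⟩ := (isCompact_Icc (a := y) (b := u)).exists_bound_of_continuousOn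
      hcE.continuousOn
    refine (memLp_indicator_const (μ := volume) p (measurableSet_Ico (a := y) (b := u)) B
      (Or.inr measure_Ico_lt_top.ne)).mono
      (hcE.aestronglyMeasurable.indicator measurableSet_Ico) (ae_of_all _ fun x => ?_)
    by_cases hx : x ∈ Set.Ico y u
    · rw [Set.indicator_of_mem hx, Set.indicator_of_mem hx]
      exact (hB x (Set.Ico_subset_Icc_self hx)).trans (le_abs_self B)
    · rw [Set.indicator_of_notMem hx, Set.indicator_of_notMem hx]
  have hw := memLp_weight hqloc hδ hQ u (1 - p⁻¹)⁻¹
  set φ : Lp ℝ p (volume : Measure ℝ) →L[ℝ] ℝ :=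
    (ContinuousLinearMap.mul ℝ ℝ).lpPairing volume _ p (hw.toLp _) with hφ
  refine ⟨(ContinuousLinearMap.toSpanSingleton ℝ (hv.toLp _)).comp φ, ?_, fun f => ?_⟩
  · rw [ContinuousLinearMap.coe_comp]
    exact (isCompactOperator_of_locallyCompactSpace_dom φ).clm_comp _
  have hφf : φ f = ∫ t in Set.Ioi u, Real.exp (-∫ ξ in (0 : ℝ)..t, q ξ) * (f : ℝ → ℝ) t := by
    rw [hφ, ContinuousLinearMap.lpPairing_eq_integral, ← integral_indicator measurableSet_Ioi]
    refine integral_congr_ae ?_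
    filter_upwards [hw.coeFn_toLp] with t ht
    rw [ht, ContinuousLinearMap.mul_apply']
    by_cases htu : t ∈ Set.Ioi u
    · rw [Set.indicator_of_mem htu, Set.indicator_of_mem htu]
    · rw [Set.indicator_of_notMem htu, Set.indicator_of_notMem htu, zero_mul]
  have e : ((ContinuousLinearMap.toSpanSingleton ℝ (hv.toLp _)).comp φ) f
    = φ f • hv.toLp _ := rfl
  rw [e]
  filter_upwards [Lp.coeFn_smul (φ f) (hv.toLp _), hv.coeFn_toLp] with x h1 h2
  rw [h1, Pi.smul_apply, h2, smul_eq_mul, hφf]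
  by_cases hx : x ∈ Set.Ico y u
  · rw [Set.indicator_of_mem hx, Set.indicator_of_mem hx, mul_comm, ← integral_const_mul]
    refine integral_congr_ae (ae_of_all _ fun t => ?_)
    simp only [kernel_eq hqloc x t, mul_assoc]
  · rw [Set.indicator_of_notMem hx, Set.indicator_of_notMem hx, mul_zero]

/-- Summing the rank-one operators of finitely many cells keeps compactness. -/
lemma exists_compact_cells (hqloc : LocallyIntegrable q volume) {δ C : ℝ} (hδ : 0 < δ)
    (hQ : ∀ x t, x ≤ t → δ * (t - x) - C ≤ ∫ ξ in x..t, q ξ) (y u : ℕ → ℝ) (n : ℕ) :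
    ∃ S : Lp ℝ p (volume : Measure ℝ) →L[ℝ] Lp ℝ p (volume : Measure ℝ),
      IsCompactOperator S ∧ ∀ f : Lp ℝ p (volume : Measure ℝ), ∀ᵐ x : ℝ,
        (S f : ℝ → ℝ) x = ∑ j ∈ Finset.range n, (Set.Ico (y j) (u j)).indicator
          (fun x => ∫ t in Set.Ioi (u j), Real.exp (-∫ ξ in x..t, q ξ) * (f : ℝ → ℝ) t) x := by
  induction n with
  | zero =>
    refine ⟨0, isCompactOperator_zero, fun f => ?_⟩
    simp
  | succ n ih =>
    obtain ⟨S, hS, hSf⟩ := ih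
    obtain ⟨R, hR, hRf⟩ := exists_compact_cell (p := p) hqloc hδ hQ (y n) (u n)
    refine ⟨S + R, hS.add hR, fun f => ?_⟩
    filter_upwards [hSf f, hRf f, Lp.coeFn_add (S f) (R f)] with x h1 h2 h3
    rw [add_apply, h3, Pi.add_apply, h1, h2, Finset.sum_range_succ]

/-- The substitution `t = x + s`, which turns integrals over `(x, ∞)` into the averages of
translates required by `opNorm_le_of_weighted_translates`. -/
lemma setLIntegral_Ioi_translate (x : ℝ) (g : ℝ → ℝ≥0∞) :
    ∫⁻ t in Set.Ioi x, g t = ∫⁻ s in Set.Ioi (0 : ℝ), g (x + s) := by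
  have h := (measurePreserving_add_left (volume : Measure ℝ) x).setLIntegral_comp_preimage_emb
    (measurableEmbedding_addLeft x) g (Set.Ioi x)
  simpa using h.symm

end Approximation

/-! ### The two implications -/

section Directions
variable {q : ℝ → ℝ} {p : ℝ≥0∞} [hp : Fact (1 ≤ p)]

/-- `T` is a norm limit of finite-rank operators. Cut `[-N, N)` into cells of length `h`; start the
integral at the right end of the cell of `x` if `x ∈ [-N, N)`, and use `0` otherwise. The error is
controlled by the weight `tailKernel q N + 1_{(0, h]}`, of integral at most `ε / 2`. -/
theorem isCompactOperator_of_tendsto_mass (hq : ∀ x, 0 ≤ q x)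
    (hqloc : LocallyIntegrable q volume) {δ C : ℝ} (hδ : 0 < δ)
    (hQ : ∀ x t, x ≤ t → δ * (t - x) - C ≤ ∫ ξ in x..t, q ξ) (hptop : p ≠ ∞)
    (T : Lp ℝ p (volume : Measure ℝ) →L[ℝ] Lp ℝ p (volume : Measure ℝ))
    (hT : ∀ f : Lp ℝ p (volume : Measure ℝ), ∀ᵐ x : ℝ ∂volume,
      (T f : ℝ → ℝ) x =
        ∫ t in Set.Ioi x, Real.exp (-∫ ξ in x..t, q ξ) * (f : ℝ → ℝ) t)
    (hlim : ∀ b : ℝ, 0 < b →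
        Tendsto (fun x : ℝ => ∫ t in x - b..x + b, q t) (cocompact ℝ) atTop) :
    IsCompactOperator T := by
  have hcl := isClosed_setOfPred_isCompactOperator (σ₁₂ := RingHom.id ℝ)
    (M₁ := Lp ℝ p (volume : Measure ℝ)) (M₂ := Lp ℝ p (volume : Measure ℝ))
  suffices h : T ∈ closure {f : Lp ℝ p (volume : Measure ℝ) →L[ℝ] Lp ℝ p (volume : Measure ℝ) |
      IsCompactOperator f} by
    rw [hcl.closure_eq] at h; exact h
  rw [Metric.mem_closure_iff]
  intro ε hε
  have hε4 : 0 < ε / 4 := by positivity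
  obtain ⟨N, hN, hN1⟩ := (((ENNReal.tendsto_nhds_zero.1
    (tendsto_lintegral_tailKernel hq hqloc hδ hQ hlim)) (ENNReal.ofReal (ε / 4))
    (by simpa using hε)).and (eventually_ge_atTop 1)).exists
  have hN0 : (0 : ℝ) < N := by exact_mod_cast hN1
  obtain ⟨n, hn⟩ := exists_nat_gt (2 * N / (ε / 4))
  have hn0 : (0 : ℝ) < n := lt_trans (by positivity) hn
  set h : ℝ := 2 * N / n with hh
  have h0 : 0 < h := by positivity
  have hnh : n * h = 2 * N := by rw [hh]; field_simp
  have hhε : h ≤ ε / 4 := by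
    rw [div_lt_iff₀ hε4] at hn
    rw [hh, div_le_iff₀ hn0]; linarith
  obtain ⟨S, hS, hSf⟩ := exists_compact_cells (p := p) hqloc hδ hQ
    (fun j => -N + j * h) (fun j => -N + (j + 1) * h) n
  refine ⟨S, hS, ?_⟩
  rw [dist_eq_norm]
  refine lt_of_le_of_lt (b := ε / 2) ?_ (by linarith)
  have hkm : Measurable (fun s => tailKernel q N s + (Set.Ioc 0 h).indicator 1 s) :=
    (measurable_tailKernel hq hqloc N).add (measurable_one.indicator measurableSet_Ioc)
  refine opNorm_le_of_weighted_translates hptop (T - S) _ hkm (fun f => ?_) (by positivity) ?_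
  swap
  · rw [lintegral_add_left (measurable_tailKernel hq hqloc N),
      lintegral_indicator_one measurableSet_Ioc, Measure.restrict_apply measurableSet_Ioc,
      show ε / 2 = ε / 4 + ε / 4 by ring, ENNReal.ofReal_add hε4.le hε4.le]
    refine add_le_add hN ((measure_mono Set.inter_subset_left).trans ?_)
    rw [Real.volume_Ioc, sub_zero]
    exact ENNReal.ofReal_le_ofReal hhε
  filter_upwards [hT f, hSf f, Lp.coeFn_sub (T f) (S f)] with x h1 h2 h3
  rw [sub_apply, h3, Pi.sub_apply, h1, h2]
  by_cases hx : -N ≤ x ∧ x < N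
  · -- inside `[-N, N)`, only the piece of the integral between `x` and its grid point remains
    have hy : 0 ≤ (x + N) / h := div_nonneg (by linarith) h0.le
    set j := ⌊(x + N) / h⌋₊ with hj
    have hj1 : (j : ℝ) * h ≤ x + N := (le_div_iff₀ h0).1 (Nat.floor_le hy)
    have hj2 : x + N < (j + 1) * h := (div_lt_iff₀ h0).1 (Nat.lt_floor_add_one _)
    have hjn : j < n := by
      have : (j : ℝ) * h < n * h := by rw [hnh]; linarith
      exact_mod_cast lt_of_mul_lt_mul_right this h0.le
    have hmem : x ∈ Set.Ico (-N + j * h) (-N + (j + 1) * h) := ⟨by linarith, by linarith⟩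
    rw [Finset.sum_eq_single_of_mem j (Finset.mem_range.2 hjn), Set.indicator_of_mem hmem]
    swap
    · intro i _ hij
      refine Set.indicator_of_notMem (fun hi => hij ?_) _
      have a1 : (i : ℝ) * h < (j + 1 : ℕ) * h := by push_cast; linarith [hi.1]
      have a2 : (j : ℝ) * h < (i + 1 : ℕ) * h := by push_cast; linarith [hi.2]
      have a3 : i < j + 1 := by exact_mod_cast lt_of_mul_lt_mul_right a1 h0.le
      have a4 : j < i + 1 := by exact_mod_cast lt_of_mul_lt_mul_right a2 h0.le
      omega
    rw [← setIntegral_sdiff measurableSet_Ioi (integrableOn_kernel_mul hqloc hδ hQ f x x)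
      (Set.Ioi_subset_Ioi hmem.2.le)]
    refine (enorm_integral_le_lintegral_enorm _).trans ?_
    calc _ ≤ ∫⁻ t in Set.Ioc x (x + h), ‖(f : ℝ → ℝ) t‖ₑ := by
          have hsub : Set.Ioi x \ Set.Ioi (-N + (j + 1) * h) ⊆ Set.Ioc x (x + h) := by
            intro t ht
            have := ht.2
            rw [Set.mem_Ioi, not_lt] at this
            exact ⟨ht.1, by linarith⟩
          refine (lintegral_mono_set hsub).trans ?_
          refine setLIntegral_mono' measurableSet_Ioc fun t ht => ?_
          rw [enorm_mul]
          refine mul_le_of_le_one_left (zero_le) ?_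
          rw [Real.enorm_of_nonneg (Real.exp_nonneg _), ENNReal.ofReal_le_one,
            Real.exp_le_one_iff, neg_nonpos]
          exact intervalIntegral.integral_nonneg ht.1.le fun _ _ => hq _
      _ = ∫⁻ t in Set.Ioi x, (Set.Ioc x (x + h)).indicator (fun t => ‖(f : ℝ → ℝ) t‖ₑ) t := by
          rw [lintegral_indicator measurableSet_Ioc, Measure.restrict_restrict measurableSet_Ioc,
            Set.inter_eq_left.2 Set.Ioc_subset_Ioi_self]
      _ = ∫⁻ s in Set.Ioi (0 : ℝ),
            (Set.Ioc x (x + h)).indicator (fun t => ‖(f : ℝ → ℝ) t‖ₑ) (x + s) :=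
          setLIntegral_Ioi_translate x _
      _ ≤ _ := by
          refine lintegral_mono fun s => ?_
          by_cases hs : s ∈ Set.Ioc 0 h
          · rw [Set.indicator_of_mem (by constructor <;> linarith [hs.1, hs.2]),
              Set.indicator_of_mem hs]
            exact le_mul_of_one_le_left zero_le (by simp)
          · rw [Set.indicator_of_notMem]
            · exact zero_le
            · exact fun hs' => hs ⟨by linarith [hs'.1], by linarith [hs'.2]⟩
  · have hx' : (N : ℝ) ≤ |x| := by
      rw [le_abs]
      by_contra! hcon
      exact hx ⟨by linarith, hcon.1⟩
    rw [Finset.sum_eq_zero, sub_zero]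
    swap
    · intro i hi
      refine Set.indicator_of_notMem (fun hxi => hx ⟨?_, ?_⟩) _
      · have : 0 ≤ (i : ℝ) * h := by positivity
        linarith [hxi.1]
      · have a1 : ((i + 1 : ℕ) : ℝ) ≤ n := by
          exact_mod_cast Finset.mem_range.1 hi
        have a2 := mul_le_mul_of_nonneg_right a1 h0.le
        push_cast at a2
        linarith [hxi.2]
    refine (enorm_integral_le_lintegral_enorm _).trans ?_
    rw [setLIntegral_Ioi_translate]
    refine lintegral_mono fun s => ?_
    rw [enorm_mul]
    gcongr
    refine le_trans ?_ le_self_add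
    rw [Real.enorm_of_nonneg (Real.exp_nonneg _)]
    exact le_iSup₂_of_le (f := fun (x : ℝ) (_ : (N : ℝ) ≤ |x|) =>
      ENNReal.ofReal (Real.exp (-∫ ξ in x..x + s, q ξ))) x hx' le_rfl

/-- The image of the indicator of `[x₀ - b, x₀ + b]` is bounded below on the left half of the
interval in terms of the mass that `q` puts on the interval. -/
lemma ae_lower_bound_image_indicator (hq : ∀ x, 0 ≤ q x) (hqloc : LocallyIntegrable q volume)
    (T : Lp ℝ p (volume : Measure ℝ) →L[ℝ] Lp ℝ p (volume : Measure ℝ))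
    (hT : ∀ f : Lp ℝ p (volume : Measure ℝ), ∀ᵐ x : ℝ ∂volume,
      (T f : ℝ → ℝ) x =
        ∫ t in Set.Ioi x, Real.exp (-∫ ξ in x..t, q ξ) * (f : ℝ → ℝ) t)
    {b A x₀ : ℝ} (hb : 0 < b) (hA : ∫ t in x₀ - b..x₀ + b, q t ≤ A) :
    ∀ᵐ x ∂(volume.restrict (Set.Icc (x₀ - b) x₀)), b * Real.exp (-A) ≤
      (T (indicatorConstLp p (measurableSet_Icc (a := x₀ - b) (b := x₀ + b))
        measure_Icc_lt_top.ne (1 : ℝ)) : ℝ → ℝ) x := by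
  rw [ae_restrict_iff' measurableSet_Icc]
  set f := indicatorConstLp p (measurableSet_Icc (a := x₀ - b) (b := x₀ + b))
        (μ := volume) measure_Icc_lt_top.ne (1 : ℝ) with hf
  filter_upwards [hT f] with x hx hxI
  have hxle : x ≤ x₀ + b := by linarith [hxI.2]
  have hcE : Continuous fun t => Real.exp (-∫ ξ in x..t, q ξ) := by
    have hc := continuous_primitive_of_locallyIntegrable hqloc
    simp_rw [kernel_eq hqloc x]
    fun_prop
  have e : (T f : ℝ → ℝ) x = ∫ t in x..x₀ + b, Real.exp (-∫ ξ in x..t, q ξ) := by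
    rw [hx, intervalIntegral.integral_of_le hxle, ← integral_indicator measurableSet_Ioi,
      ← integral_indicator measurableSet_Ioc]
    refine integral_congr_ae ?_
    filter_upwards [indicatorConstLp_coeFn (p := p) (μ := volume)
      (hs := measurableSet_Icc (a := x₀ - b) (b := x₀ + b))
      (hμs := measure_Icc_lt_top.ne) (c := (1 : ℝ))] with t ht
    by_cases h1 : t ∈ Set.Ioc x (x₀ + b)
    · rw [Set.indicator_of_mem h1, Set.indicator_of_mem (show t ∈ Set.Ioi x from h1.1), hf, ht,
        Set.indicator_of_mem (show t ∈ Set.Icc (x₀ - b) (x₀ + b) from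
          ⟨by linarith [h1.1, hxI.1], h1.2⟩), mul_one]
    · rw [Set.indicator_of_notMem h1]
      by_cases h2 : t ∈ Set.Ioi x
      · rw [Set.indicator_of_mem h2, hf, ht, Set.indicator_of_notMem (fun h3 => h1 ⟨h2, h3.2⟩),
          mul_zero]
      · rw [Set.indicator_of_notMem h2]
  rw [e]
  calc b * Real.exp (-A) ≤ (x₀ + b - x) * Real.exp (-A) := by
        gcongr; linarith [hxI.2]
    _ = ∫ t in x..x₀ + b, Real.exp (-A) := by
        rw [intervalIntegral.integral_const, smul_eq_mul]
    _ ≤ _ := by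
        refine intervalIntegral.integral_mono_on hxle (by simp) (hcE.intervalIntegrable _ _)
          fun t ht => Real.exp_le_exp.2 (neg_le_neg ?_)
        exact (intervalIntegral_mono_of_subset hq hqloc hxI.1 ht.1 ht.2).trans hA

/-- If the mass of `q` on `[x n - b, x n + b]` stays bounded while `|x n| → ∞`, then the images of
the indicators of these intervals keep a fixed amount of `L^p` norm on the escaping intervals,
whereas any limit point in `L^p`, `p < ∞`, has vanishing norm there. -/
theorem tendsto_mass_of_isCompactOperator (hq : ∀ x, 0 ≤ q x)
    (hqloc : LocallyIntegrable q volume) (hptop : p ≠ ∞)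
    (T : Lp ℝ p (volume : Measure ℝ) →L[ℝ] Lp ℝ p (volume : Measure ℝ))
    (hT : ∀ f : Lp ℝ p (volume : Measure ℝ), ∀ᵐ x : ℝ ∂volume,
      (T f : ℝ → ℝ) x =
        ∫ t in Set.Ioi x, Real.exp (-∫ ξ in x..t, q ξ) * (f : ℝ → ℝ) t)
    (hcomp : IsCompactOperator T) (b : ℝ) (hb : 0 < b) :
    Tendsto (fun x : ℝ => ∫ t in x - b..x + b, q t) (cocompact ℝ) atTop := by
  have hp0 : p ≠ 0 := (zero_lt_one.trans_le hp.out).ne'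
  have hr0 : 0 < p.toReal := ENNReal.toReal_pos hp0 hptop
  by_contra hcon
  obtain ⟨A, hA⟩ : ∃ A : ℝ, ∀ n : ℕ, ∃ x : ℝ, (n : ℝ) < |x| ∧ ∫ t in x - b..x + b, q t ≤ A := by
    by_contra! hno
    refine hcon (tendsto_atTop.2 fun A => ?_)
    obtain ⟨n, hn⟩ := hno A
    rw [← Metric.cobounded_eq_cocompact,
      (Metric.hasBasis_cobounded_compl_closedBall (0 : ℝ)).eventually_iff]
    refine ⟨n, trivial, fun x hx => (hn x ?_).le⟩
    simpa using hx
  choose x hxn hxA using hA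
  set f : ℕ → Lp ℝ p (volume : Measure ℝ) := fun n =>
    indicatorConstLp p (measurableSet_Icc (a := x n - b) (b := x n + b))
        measure_Icc_lt_top.ne (1 : ℝ) with hf
  obtain ⟨K, hK, hKsub⟩ := hcomp.image_closedBall_subset_compact (f := T.toLinearMap)
    ((2 * b) ^ (1 / p.toReal))
  have hTK : ∀ n, T (f n) ∈ K := by
    intro n
    refine hKsub ⟨f n, ?_, rfl⟩
    rw [mem_closedBall_zero_iff, hf]
    refine norm_indicatorConstLp_le.trans (le_of_eq ?_)
    rw [norm_one, one_mul, measureReal_def, Real.volume_Icc,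
      ENNReal.toReal_ofReal (by linarith)]
    congr 1; ring
  obtain ⟨g, -, φ, hφ, hlim⟩ := hK.tendsto_subseq hTK
  set c : ℝ≥0∞ := ‖b * Real.exp (-A)‖ₑ * ENNReal.ofReal b ^ (1 / p.toReal) with hc
  have hc0 : c ≠ 0 := by
    rw [hc]
    refine mul_ne_zero ?_ ?_
    · rw [enorm_ne_zero]; positivity
    · have : 0 < ENNReal.ofReal b ^ (1 / p.toReal) :=
        ENNReal.rpow_pos (by simpa using hb) ENNReal.ofReal_ne_top
      exact this.ne'
  have hctop : c ≠ ∞ :=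
    ENNReal.mul_ne_top enorm_ne_top (ENNReal.rpow_ne_top_of_nonneg (by positivity)
      ENNReal.ofReal_ne_top)
  have hc4 : c / 4 ≠ 0 := by simp [hc0]
  obtain ⟨g', hg'c, hg', -, hg'm⟩ := (Lp.memLp g).exists_hasCompactSupport_eLpNorm_sub_le hptop hc4
  obtain ⟨M, hM⟩ := hg'c.isCompact.isBounded.subset_closedBall (0 : ℝ)
  have hlim' := (Lp.tendsto_Lp_iff_tendsto_eLpNorm' _ _).1 hlim
  obtain ⟨m, hm1, hm2⟩ := (((ENNReal.tendsto_nhds_zero.1 hlim') (c / 4)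
    (pos_iff_ne_zero.2 hc4)).and (eventually_ge_atTop ⌈M + b⌉₊)).exists
  set n := φ m
  have hnM : M + b < |x n| := by
    have : (m : ℝ) ≤ n := by exact_mod_cast hφ.id_le m
    have := Nat.le_of_ceil_le hm2
    linarith [hxn n]
  set μ := (volume : Measure ℝ).restrict (Set.Icc (x n - b) (x n)) with hμ
  have hle : ∀ u : ℝ → ℝ, eLpNorm u p μ ≤ eLpNorm u p volume := fun u =>
    eLpNorm_mono_measure u Measure.restrict_le_self
  have hμu : μ Set.univ = ENNReal.ofReal b := by
    rw [hμ, Measure.restrict_apply_univ, Real.volume_Icc]; congr 1; ring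
  have h1 : c ≤ eLpNorm (T (f n)) p μ := by
    have e := eLpNorm_const' (μ := μ) (b * Real.exp (-A)) hp0 hptop
    rw [hμu] at e
    rw [hc, ← e]
    refine eLpNorm_mono_ae ?_
    filter_upwards [ae_lower_bound_image_indicator hq hqloc T hT hb (hxA n)] with y hy
    rw [Real.norm_of_nonneg (by positivity)]
    exact hy.trans (le_abs_self _)
  have h2 : eLpNorm g' p μ = 0 := by
    rw [eLpNorm_congr_ae (g := (0 : ℝ → ℝ)), eLpNorm_zero]
    refine (ae_restrict_iff' measurableSet_Icc).2 (ae_of_all _ fun y hy => ?_)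
    refine image_eq_zero_of_notMem_tsupport fun hys => ?_
    have hyM := mem_closedBall_zero_iff.1 (hM hys)
    rw [Real.norm_eq_abs] at hyM
    have h3 := abs_sub_abs_le_abs_sub (x n) y
    have h4 : |x n - y| ≤ b := abs_le.2 ⟨by linarith [hy.2], by linarith [hy.1]⟩
    linarith
  have hTm : AEStronglyMeasurable (T (f n)) μ := (Lp.aestronglyMeasurable _).restrict
  have hgm : AEStronglyMeasurable g μ := (Lp.aestronglyMeasurable _).restrict
  have hg'μ : AEStronglyMeasurable g' μ := hg'm.aestronglyMeasurable.restrict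
  have h5 : eLpNorm (T (f n)) p μ ≤ c / 4 + c / 4 := by
    have e : (T (f n) : ℝ → ℝ) = ((T (f n) : ℝ → ℝ) - g) + ((g - g') + g') := by
      ext y; simp
    rw [e]
    refine (eLpNorm_add_le (hTm.sub hgm) ((hgm.sub hg'μ).add hg'μ) hp.out).trans ?_
    refine add_le_add ((hle _).trans hm1) ?_
    refine (eLpNorm_add_le (hgm.sub hg'μ) hg'μ hp.out).trans ?_
    rw [h2, add_zero]
    exact (hle _).trans hg'
  have h6 := h1.trans h5
  clear_value c
  lift c to NNReal using hctop
  have h7 : (c : ℝ≥0∞) / 4 = ((c / 4 : NNReal) : ℝ≥0∞) := by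
    rw [ENNReal.coe_div (by norm_num)]; rfl
  rw [h7] at h6
  have h8 : c ≤ c / 4 + c / 4 := by exact_mod_cast h6
  have h9 : (c : ℝ) ≤ c / 4 + c / 4 := by exact_mod_cast h8
  have h10 : (c : ℝ) ≠ 0 := by exact_mod_cast hc0
  have : 0 < (c : ℝ) := lt_of_le_of_ne c.coe_nonneg h10.symm
  linarith

end Directions

theorem stmt19 (q : ℝ → ℝ) (hq : ∀ x, 0 ≤ q x)
    (hqloc : LocallyIntegrable q volume)
    (a : ℝ) (ha : 0 < a) (hqa : 0 < ⨅ z : ℝ, ∫ t in z - a..z + a, q t)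
    (p : ℝ≥0∞) [Fact (1 ≤ p)] (hptop : p ≠ ∞)
    (T : Lp ℝ p (volume : Measure ℝ) →L[ℝ] Lp ℝ p (volume : Measure ℝ))
    -- `T` is the operator `L⁻¹`, i.e. `(T f)(x) = ∫_x^∞ e^{-∫_x^t q} f(t) dt`
    (hT : ∀ f : Lp ℝ p (volume : Measure ℝ), ∀ᵐ x : ℝ ∂volume,
      (T f : ℝ → ℝ) x =
        ∫ t in Set.Ioi x, Real.exp (-∫ ξ in x..t, q ξ) * (f : ℝ → ℝ) t) :
    IsCompactOperator T ↔
      ∀ b : ℝ, 0 < b →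
        Tendsto (fun x : ℝ => ∫ t in x - b..x + b, q t) (cocompact ℝ) atTop := by
  obtain ⟨δ, C, hδ, hQ⟩ := exists_linear_lower_bound hq hqloc ha hqa
  exact ⟨fun h b hb => tendsto_mass_of_isCompactOperator hq hqloc hptop T hT h b hb,
    isCompactOperator_of_tendsto_mass hq hqloc hδ hQ hptop T hT⟩
end
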